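/- Let M be a matching of maximum weight among all matchings of size n/3 in G. Then there exists a perfect 3-path packing P of G with w(P) ≥ (2/3)·w(M) + (1/12)·w(M'_1) + (1/6)·w(M''_1) + (1/4)·w(M'''_1) + (1/6)·w(M_2) + (1/4)·w(M_3) + (1/3)·w(M_4) + (1/2)·w(X_2) + (1/2)·w(X_3) + (1/2)·w(X_4) + w(X_5) + (1/2)·w(X_7) − (1/4)·w(Y_7) + (1/4)·w(P*_6) + (1/4)·w(P*_8). -/

import Mathlib

open Finset
open scoped Classical

namespace MW3PP

/-- A 3-path `xyz`: a path on three distinct vertices with middle vertex `y`. -/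
structure P3 (V : Type*) where
  x : V
  y : V
  z : V
  hxy : x ≠ y
  hyz : y ≠ z
  hxz : x ≠ z

variable {V : Type*} [Fintype V] [DecidableEq V]

/-- The vertex set of a 3-path. -/
def P3.verts (p : P3 V) : Finset V := {p.x, p.y, p.z}

/-- The two edges of a 3-path. -/
def P3.edges (p : P3 V) : Finset (Sym2 V) := {s(p.x, p.y), s(p.y, p.z)}

/-- The weight of a 3-path. -/
def P3.wt (w : Sym2 V → ℝ) (p : P3 V) : ℝ := w s(p.x, p.y) + w s(p.y, p.z)

/-- The total weight of a set of edges. -/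
def ew (w : Sym2 V → ℝ) (F : Finset (Sym2 V)) : ℝ := ∑ e ∈ F, w e

/-- The total weight of a set of 3-paths. -/
def pw (w : Sym2 V → ℝ) (P : Finset (P3 V)) : ℝ := ∑ p ∈ P, p.wt w

/-- `∑_{xyz ∈ S} max (w (xy)) (w (yz))`. -/
def maxSum (w : Sym2 V → ℝ) (S : Finset (P3 V)) : ℝ :=
  ∑ p ∈ S, max (w s(p.x, p.y)) (w s(p.y, p.z))

/-- A perfect 3-path packing: `n/3` pairwise vertex-disjoint 3-paths covering all vertices. -/
def IsPacking (P : Finset (P3 V)) : Prop :=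
  P.card = Fintype.card V / 3 ∧
  (∀ p ∈ P, ∀ q ∈ P, p ≠ q → Disjoint p.verts q.verts) ∧
  (∀ v : V, ∃ p ∈ P, v ∈ p.verts)

/-- A maximum-weight perfect 3-path packing. -/
def IsMaxPacking (w : Sym2 V → ℝ) (P : Finset (P3 V)) : Prop :=
  IsPacking P ∧ ∀ Q : Finset (P3 V), IsPacking Q → pw w Q ≤ pw w P

/-- A matching: a set of pairwise vertex-disjoint (non-loop) edges. -/
def IsMatching (M : Finset (Sym2 V)) : Prop :=
  (∀ e ∈ M, ¬ e.IsDiag) ∧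
  ∀ e ∈ M, ∀ f ∈ M, e ≠ f → ∀ v : V, v ∈ e → v ∉ f

/-- A maximum-weight matching among all matchings of size `k`. -/
def IsMaxMatchingOfSize (w : Sym2 V → ℝ) (k : ℕ) (M : Finset (Sym2 V)) : Prop :=
  IsMatching M ∧ M.card = k ∧
  ∀ M' : Finset (Sym2 V), IsMatching M' → M'.card = k → ew w M' ≤ ew w M

/-- `v ∈ V(M)` : vertex `v` is covered by the matching `M`. -/
def covered (M : Finset (Sym2 V)) (v : V) : Prop := ∃ e ∈ M, v ∈ e

/-- `e_u` : the edge of `M` containing `u` (junk value if there is none). -/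
noncomputable def eMatch (M : Finset (Sym2 V)) (u : V) : Sym2 V :=
  if h : ∃ e ∈ M, u ∈ e then h.choose else s(u, u)

/-- The cost `c` of an edge with respect to a matching `M`:
`c(uv) = w(uv) - min (w (e_u)) (w (e_v))` if both endpoints are covered by `M`,
and `c(uv) = w(uv)` otherwise. -/
noncomputable def cost (w : Sym2 V → ℝ) (M : Finset (Sym2 V)) : Sym2 V → ℝ :=
  Sym2.lift ⟨fun u v =>
    if covered M u ∧ covered M v then
      w s(u, v) - min (w (eMatch M u)) (w (eMatch M v))
    else w s(u, v), by
      intro u v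
      dsimp only
      by_cases h : covered M u ∧ covered M v
      · rw [if_pos h, if_pos (show covered M v ∧ covered M u from ⟨h.2, h.1⟩),
          Sym2.eq_swap, min_comm]
      · rw [if_neg h, if_neg (show ¬(covered M v ∧ covered M u) from fun h' => h ⟨h'.2, h'.1⟩),
          Sym2.eq_swap]⟩

/-- The total cost of a set of edges. -/
noncomputable def cw (w : Sym2 V → ℝ) (M F : Finset (Sym2 V)) : ℝ := ∑ e ∈ F, cost w M e

/-- The number of vertices of the 3-path `p` covered by `M`. -/
noncomputable def kcnt (M : Finset (Sym2 V)) (p : P3 V) : ℕ :=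
  (p.verts.filter fun v => covered M v).card

/-- Exactly one of the two edges of `p` lies in `M`. -/
def exOne (M : Finset (Sym2 V)) (p : P3 V) : Prop :=
  (s(p.x, p.y) ∈ M ∧ s(p.y, p.z) ∉ M) ∨ (s(p.x, p.y) ∉ M ∧ s(p.y, p.z) ∈ M)

def cls1 (M : Finset (Sym2 V)) (p : P3 V) : Prop := kcnt M p = 0
def cls2 (M : Finset (Sym2 V)) (p : P3 V) : Prop := kcnt M p = 1 ∧ ¬ covered M p.y
def cls3 (M : Finset (Sym2 V)) (p : P3 V) : Prop := kcnt M p = 1 ∧ covered M p.y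
def cls4 (M : Finset (Sym2 V)) (p : P3 V) : Prop := kcnt M p = 2 ∧ ¬ covered M p.y
def cls5 (M : Finset (Sym2 V)) (p : P3 V) : Prop := kcnt M p = 2 ∧ covered M p.y ∧ exOne M p
def cls6 (M : Finset (Sym2 V)) (p : P3 V) : Prop :=
  kcnt M p = 2 ∧ covered M p.y ∧ s(p.x, p.y) ∉ M ∧ s(p.y, p.z) ∉ M
def cls7 (M : Finset (Sym2 V)) (p : P3 V) : Prop := kcnt M p = 3 ∧ exOne M p
def cls8 (M : Finset (Sym2 V)) (p : P3 V) : Prop :=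
  kcnt M p = 3 ∧ s(p.x, p.y) ∉ M ∧ s(p.y, p.z) ∉ M

/-- The subset of a set of 3-paths satisfying a predicate. -/
noncomputable def psel (P : Finset (P3 V)) (c : P3 V → Prop) : Finset (P3 V) := P.filter c

/-- The set of all edges of the 3-paths in `S`. -/
def Esub (S : Finset (P3 V)) : Finset (Sym2 V) := S.biUnion P3.edges

/-- The heaviest edge of a 3-path (the edge `xy` in case of a tie). -/
noncomputable def heavy (w : Sym2 V → ℝ) (p : P3 V) : Sym2 V :=
  if w s(p.y, p.z) ≤ w s(p.x, p.y) then s(p.x, p.y) else s(p.y, p.z)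

noncomputable def X1 (w : Sym2 V → ℝ) (P : Finset (P3 V)) (M : Finset (Sym2 V)) :
    Finset (Sym2 V) := (psel P (cls1 M)).image (heavy w)
noncomputable def X2 (P : Finset (P3 V)) (M : Finset (Sym2 V)) : Finset (Sym2 V) :=
  (psel P (cls2 M)).image fun p => if covered M p.x then s(p.x, p.y) else s(p.y, p.z)
noncomputable def X3 (w : Sym2 V → ℝ) (P : Finset (P3 V)) (M : Finset (Sym2 V)) :
    Finset (Sym2 V) := (psel P (cls3 M)).image (heavy w)
noncomputable def X4 (w : Sym2 V → ℝ) (P : Finset (P3 V)) (M : Finset (Sym2 V)) :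
    Finset (Sym2 V) := (psel P (cls4 M)).image (heavy w)
noncomputable def X5 (P : Finset (P3 V)) (M : Finset (Sym2 V)) : Finset (Sym2 V) :=
  (psel P (cls5 M)).image fun p => if s(p.x, p.y) ∈ M then s(p.y, p.z) else s(p.x, p.y)
noncomputable def X6 (P : Finset (P3 V)) (M : Finset (Sym2 V)) : Finset (Sym2 V) :=
  (psel P (cls6 M)).image fun p => if covered M p.x then s(p.y, p.z) else s(p.x, p.y)
noncomputable def X7 (P : Finset (P3 V)) (M : Finset (Sym2 V)) : Finset (Sym2 V) :=
  (psel P (cls7 M)).image fun p => if s(p.x, p.y) ∈ M then s(p.y, p.z) else s(p.x, p.y)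
noncomputable def X8 (w : Sym2 V → ℝ) (P : Finset (P3 V)) (M : Finset (Sym2 V)) :
    Finset (Sym2 V) := (psel P (cls8 M)).image (heavy w)

noncomputable def Y1 (w : Sym2 V → ℝ) (P : Finset (P3 V)) (M : Finset (Sym2 V)) :
    Finset (Sym2 V) := Esub (psel P (cls1 M)) \ X1 w P M
noncomputable def Y2 (P : Finset (P3 V)) (M : Finset (Sym2 V)) : Finset (Sym2 V) :=
  Esub (psel P (cls2 M)) \ X2 P M
noncomputable def Y3 (w : Sym2 V → ℝ) (P : Finset (P3 V)) (M : Finset (Sym2 V)) :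
    Finset (Sym2 V) := Esub (psel P (cls3 M)) \ X3 w P M
noncomputable def Y4 (w : Sym2 V → ℝ) (P : Finset (P3 V)) (M : Finset (Sym2 V)) :
    Finset (Sym2 V) := Esub (psel P (cls4 M)) \ X4 w P M
noncomputable def Y5 (P : Finset (P3 V)) (M : Finset (Sym2 V)) : Finset (Sym2 V) :=
  Esub (psel P (cls5 M)) \ X5 P M
noncomputable def Y6 (P : Finset (P3 V)) (M : Finset (Sym2 V)) : Finset (Sym2 V) :=
  Esub (psel P (cls6 M)) \ X6 P M
noncomputable def Y7 (P : Finset (P3 V)) (M : Finset (Sym2 V)) : Finset (Sym2 V) :=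
  Esub (psel P (cls7 M)) \ X7 P M
noncomputable def Y8 (w : Sym2 V → ℝ) (P : Finset (P3 V)) (M : Finset (Sym2 V)) :
    Finset (Sym2 V) := Esub (psel P (cls8 M)) \ X8 w P M

/-- An edge is a middle edge (w.r.t. `M`) if exactly one of its endpoints lies in `V(M)`. -/
def isMiddle (M : Finset (Sym2 V)) (e : Sym2 V) : Prop :=
  ∃ u v : V, e = s(u, v) ∧ covered M u ∧ ¬ covered M v

/-- Two edges share a vertex. -/
def shares (e f : Sym2 V) : Prop := ∃ v, v ∈ e ∧ v ∈ f

/-- `g` is a middle edge of some 3-path in `S`. -/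
def middleIn (M : Finset (Sym2 V)) (S : Finset (P3 V)) (g : Sym2 V) : Prop :=
  (∃ p ∈ S, g ∈ p.edges) ∧ isMiddle M g

/-- The 3-paths of `P` lying in classes 2, 3 or 4. -/
noncomputable def P234 (P : Finset (P3 V)) (M : Finset (Sym2 V)) : Finset (P3 V) :=
  psel P fun p => cls2 M p ∨ cls3 M p ∨ cls4 M p

/-- `M_1`: edges of `M` sharing a vertex with at least one middle edge of a 3-path of `P*_6`. -/
noncomputable def Mset1 (P : Finset (P3 V)) (M : Finset (Sym2 V)) : Finset (Sym2 V) :=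
  M.filter fun f => ∃ g, middleIn M (psel P (cls6 M)) g ∧ shares f g

/-- `M_2`: edges of `M` sharing a vertex with at least one middle edge, all middle edges met
belonging to 3-paths of `P*_2 ∪ P*_3 ∪ P*_4`. -/
noncomputable def Mset2 (P : Finset (P3 V)) (M : Finset (Sym2 V)) : Finset (Sym2 V) :=
  M.filter fun f =>
    (∃ g, middleIn M P g ∧ shares f g) ∧
    ∀ g, middleIn M P g → shares f g → middleIn M (P234 P M) g

/-- `M_3 = M ∩ E(P*_7)`. -/
noncomputable def Mset3 (P : Finset (P3 V)) (M : Finset (Sym2 V)) : Finset (Sym2 V) :=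
  M ∩ Esub (psel P (cls7 M))

/-- `M_4 = M ∩ E(P*_5)`. -/
noncomputable def Mset4 (P : Finset (P3 V)) (M : Finset (Sym2 V)) : Finset (Sym2 V) :=
  M ∩ Esub (psel P (cls5 M))

/-- The middle edges of 3-paths of `P*_6`. -/
noncomputable def mid6 (P : Finset (P3 V)) (M : Finset (Sym2 V)) : Finset (Sym2 V) :=
  (Esub (psel P (cls6 M))).filter (isMiddle M)

/-- `M'_1`: edges of `M_1` meeting exactly one middle edge of a 3-path of `P*_6` and
no middle edge of a 3-path of `P*_2 ∪ P*_3 ∪ P*_4`. -/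
noncomputable def Mset1' (P : Finset (P3 V)) (M : Finset (Sym2 V)) : Finset (Sym2 V) :=
  (Mset1 P M).filter fun f =>
    ((mid6 P M).filter fun g => shares f g).card = 1 ∧
    ∀ g, middleIn M (P234 P M) g → ¬ shares f g

/-- `M''_1`: edges of `M_1` meeting two middle edges of 3-paths of `P*_6`. -/
noncomputable def Mset1'' (P : Finset (P3 V)) (M : Finset (Sym2 V)) : Finset (Sym2 V) :=
  (Mset1 P M).filter fun f => ((mid6 P M).filter fun g => shares f g).card = 2

/-- `M'''_1`: edges of `M_1` meeting exactly one middle edge of a 3-path of `P*_6` and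
at least one middle edge of a 3-path of `P*_2 ∪ P*_3 ∪ P*_4`. -/
noncomputable def Mset1''' (P : Finset (P3 V)) (M : Finset (Sym2 V)) : Finset (Sym2 V) :=
  (Mset1 P M).filter fun f =>
    ((mid6 P M).filter fun g => shares f g).card = 1 ∧
    ∃ g, middleIn M (P234 P M) g ∧ shares f g

/-- Assumption on `P*`: for every 3-path `xyz ∈ P*` with `y ∉ V(M)` and `x, z ∈ V(M)`,
the vertices `x` and `z` lie in two distinct edges of `M`. -/
def Ass (P : Finset (P3 V)) (M : Finset (Sym2 V)) : Prop :=
  ∀ p ∈ P, ¬ covered M p.y → covered M p.x → covered M p.z →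
    ∃ e ∈ M, ∃ f ∈ M, p.x ∈ e ∧ p.z ∈ f ∧ e ≠ f

/-- An admissible edge w.r.t. `M`: either both endpoints are in `V(M)` and lie in two distinct
edges of `M`, or exactly one endpoint is in `V(M)`. -/
def goodEdge (M : Finset (Sym2 V)) (e : Sym2 V) : Prop :=
  (∃ u v : V, e = s(u, v) ∧ covered M u ∧ covered M v ∧ ∀ f ∈ M, ¬(u ∈ f ∧ v ∈ f)) ∨
  (∃ u v : V, e = s(u, v) ∧ covered M u ∧ ¬ covered M v)

set_option linter.unusedSectionVars false

/-- Given a fixed-point-free involution `m` and the pairs `(y p, d p)` for `p ∈ S`, the function `g`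
alternates along `m` and is constant on the pairs, while `c` labels unions of connected components,
each containing at most two vertices that belong to no pair. -/
structure Balanced {W ι : Type*} (m : W → W) (y : ι → W) (S : Finset ι) (d : ι → W)
    (g : W → Bool) (c : W → W) : Prop where
  alt : ∀ v, g (m v) = !g v
  lab : ∀ v, c (m v) = c v
  pair : ∀ p ∈ S, g (y p) = g (d p) ∧ c (y p) = c (d p)
  ends : ∀ a b e, (∀ p ∈ S, a ≠ y p ∧ a ≠ d p) → (∀ p ∈ S, b ≠ y p ∧ b ≠ d p) →
    (∀ p ∈ S, e ≠ y p ∧ e ≠ d p) → c a = c b → c b = c e → a = b ∨ b = e ∨ a = e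

section Balanced

variable {W ι : Type*} {m : W → W} {y d : ι → W} {S : Finset ι} {g : W → Bool} {c : W → W}

lemma Balanced.label_ne (h : Balanced m y S d g c) (hfix : ∀ v, m v ≠ v) {u v : W}
    (hu : ∀ p ∈ S, u ≠ y p ∧ u ≠ d p) (hv : ∀ p ∈ S, v ≠ y p ∧ v ≠ d p)
    (hm : ∀ p ∈ S, m u ≠ y p ∧ m u ≠ d p) (huv : u ≠ v) (hmv : m u ≠ v) : c u ≠ c v := by
  intro hc
  have h1 := h.ends (m u) u v hm hu hv (h.lab u) hc
  have h2 := hfix u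
  tauto

lemma Balanced.exists_insert (h : Balanced m y S d g c) {p : ι} (hp : p ∉ S) {v : W}
    (hy : ∀ q ∈ S, y p ≠ y q ∧ y p ≠ d q) (hv : ∀ q ∈ S, v ≠ y q ∧ v ≠ d q)
    (hc : c (y p) ≠ c v) :
    ∃ g' c', Balanced m y (insert p S) (Function.update d p v) g' c' := by
  have hd : ∀ q ∈ S, Function.update d p v q = d q := by
    intro q hq
    rw [Function.update_of_ne]
    rintro rfl
    exact hp hq
  refine ⟨fun u => if g (y p) = g v then g u else if c u = c v then !g u else g u,
    fun u => if c u = c v then c (y p) else c u, ⟨?_, ?_, ?_, ?_⟩⟩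
  · intro u
    have := h.alt u
    have := h.lab u
    grind
  · intro u
    simp only [h.lab u]
  · intro q hq
    rcases Finset.mem_insert.1 hq with rfl | hq
    · simp only [Function.update_self]
      have hb : g (y q) ≠ g v → (!g v) = g (y q) := by
        cases g (y q) <;> cases g v <;> simp
      grind
    · rw [hd q hq]
      have := h.pair q hq
      grind
  · intro a b e ha hb he hab hbe
    have key : ∀ u, (∀ q ∈ insert p S, u ≠ y q ∧ u ≠ Function.update d p v q) →
        (u ≠ y p ∧ u ≠ v) ∧ ∀ q ∈ S, u ≠ y q ∧ u ≠ d q := by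
      intro u hu
      refine ⟨by simpa using hu p (Finset.mem_insert_self _ _), fun q hq => ?_⟩
      have := hu q (Finset.mem_insert_of_mem hq)
      rwa [hd q hq] at this
    obtain ⟨ha1, ha2⟩ := key a ha
    obtain ⟨hb1, hb2⟩ := key b hb
    obtain ⟨he1, he2⟩ := key e he
    have hyy : ∀ s t, (∀ q ∈ S, s ≠ y q ∧ s ≠ d q) → (∀ q ∈ S, t ≠ y q ∧ t ≠ d q) →
        s ≠ y p → t ≠ y p → c s = c t → c t = c (y p) → s = t := by
      intro s t hs ht h1 h2 h3 h4
      have := h.ends s t (y p) hs ht hy h3 h4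
      tauto
    have hvv : ∀ s t, (∀ q ∈ S, s ≠ y q ∧ s ≠ d q) → (∀ q ∈ S, t ≠ y q ∧ t ≠ d q) →
        s ≠ v → t ≠ v → c s = c t → c t = c v → s = t := by
      intro s t hs ht h1 h2 h3 h4
      have := h.ends s t v hs ht hv h3 h4
      tauto
    have h3 := h.ends a b e ha2 hb2 he2
    have hab1 := hyy a b ha2 hb2 ha1.1 hb1.1
    have hae1 := hyy a e ha2 he2 ha1.1 he1.1
    have hbe1 := hyy b e hb2 he2 hb1.1 he1.1
    have hab2 := hvv a b ha2 hb2 ha1.2 hb1.2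
    have hae2 := hvv a e ha2 he2 ha1.2 he1.2
    have hbe2 := hvv b e hb2 he2 hb1.2 he1.2
    clear ha hb he key hyy hvv ha2 hb2 he2 hy hv hd h
    split_ifs at hab hbe <;> grind

end Balanced

/-- A choice, for each `p ∈ S`, of which of `x p`, `z p` is paired with `y p` in the first and which
in the second of two balanced pairings. -/
def SplitBalanced {W ι : Type*} (m : W → W) (x y z : ι → W) (S : Finset ι) : Prop :=
  ∃ (d₁ d₂ : ι → W) (g₁ g₂ : W → Bool) (c₁ c₂ : W → W),
    Balanced m y S d₁ g₁ c₁ ∧ Balanced m y S d₂ g₂ c₂ ∧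
    ∀ p ∈ S, d₁ p = x p ∧ d₂ p = z p ∨ d₁ p = z p ∧ d₂ p = x p

section Split

variable {W ι : Type*} {m : W → W} {x y z : ι → W} {own : W → ι}

lemma SplitBalanced.insert (hinv : ∀ v, m (m v) = v) (hfix : ∀ v, m v ≠ v)
    (hx : ∀ p, own (x p) = p) (hy : ∀ p, own (y p) = p) (hz : ∀ p, own (z p) = p)
    {S : Finset ι} (h : SplitBalanced m x y z S) {p : ι} (hp : p ∉ S)
    (hxy : x p ≠ y p) (hyz : y p ≠ z p) (hxz : x p ≠ z p)
    (hmx : m (y p) ≠ x p) (hmz : m (y p) ≠ z p)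
    (hmid : (∀ q ∈ S, m (y p) ≠ y q) ∨ ∀ q ∈ S, m (x p) ≠ y q ∧ m (z p) ≠ y q)
    (hends : ∀ q ∈ S, x q ≠ y q ∧ z q ≠ y q ∧ x q ≠ z q) :
    SplitBalanced m x y z (insert p S) := by
  obtain ⟨d₁, d₂, g₁, g₂, c₁, c₂, h₁, h₂, hd⟩ := h
  have free : ∀ v, own v = p → (∀ q ∈ S, v ≠ y q ∧ v ≠ d₁ q) ∧ ∀ q ∈ S, v ≠ y q ∧ v ≠ d₂ q := by
    intro v hv
    constructor
    all_goals
      intro q hq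
      have := hd q hq
      have := hx q
      have := hy q
      have := hz q
      grind
  obtain ⟨fx₁, fx₂⟩ := free _ (hx p)
  obtain ⟨fy₁, fy₂⟩ := free _ (hy p)
  obtain ⟨fz₁, fz₂⟩ := free _ (hz p)
  -- a vertex paired both times is the `y` of some member
  have touched : ∀ v, (∀ q ∈ S, v ≠ y q) →
      (∀ q ∈ S, v ≠ y q ∧ v ≠ d₁ q) ∨ ∀ q ∈ S, v ≠ y q ∧ v ≠ d₂ q := by
    intro v hv
    by_contra! hcon
    obtain ⟨⟨q, hq, h1⟩, r, hr, h2⟩ := hcon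
    have e1 := h1 (hv q hq)
    have e2 := h2 (hv r hr)
    have hqr : q = r := by
      have a1 : own v = q := by
        rw [e1]
        rcases hd q hq with h | h
        · rw [h.1, hx]
        · rw [h.1, hz]
      have a2 : own v = r := by
        rw [e2]
        rcases hd r hr with h | h
        · rw [h.2, hz]
        · rw [h.2, hx]
      rw [← a1, a2]
    subst hqr
    have := hends q hq
    have := hd q hq
    grind
  have unlinked : ∀ u v, own u = p → own v = p → u ≠ v → m u ≠ v → (∀ q ∈ S, m u ≠ y q) →
      c₁ u ≠ c₁ v ∨ c₂ u ≠ c₂ v := by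
    intro u v hu hv huv hmv hmu
    rcases touched _ hmu with ht | ht
    · exact Or.inl (h₁.label_ne hfix (free u hu).1 (free v hv).1 ht huv hmv)
    · exact Or.inr (h₂.label_ne hfix (free u hu).2 (free v hv).2 ht huv hmv)
  have e₁ := h₁.ends _ _ _ fx₁ fy₁ fz₁
  have e₂ := h₂.ends _ _ _ fx₂ fy₂ fz₂
  have nx : c₁ (x p) ≠ c₁ (y p) ∨ c₂ (x p) ≠ c₂ (y p) := by
    rcases hmid with hm | hm
    · have := unlinked (y p) (x p) (hy p) (hx p) hxy.symm hmx hm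
      grind
    · refine unlinked (x p) (y p) (hx p) (hy p) hxy ?_ fun q hq => (hm q hq).1
      intro h
      exact hmx (by rw [← h, hinv])
  have nz : c₁ (y p) ≠ c₁ (z p) ∨ c₂ (y p) ≠ c₂ (z p) := by
    rcases hmid with hm | hm
    · exact unlinked (y p) (z p) (hy p) (hz p) hyz hmz hm
    · have := unlinked (z p) (y p) (hz p) (hy p) hyz.symm
        (fun h => hmz (by rw [← h, hinv])) fun q hq => (hm q hq).2
      grind
  have hcase : (c₁ (y p) ≠ c₁ (x p) ∧ c₂ (y p) ≠ c₂ (z p)) ∨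
      (c₁ (y p) ≠ c₁ (z p) ∧ c₂ (y p) ≠ c₂ (x p)) := by
    grind
  have hupd : ∀ (d : ι → W) (v : W), ∀ q ∈ S, Function.update d p v q = d q := by
    intro d v q hq
    rw [Function.update_of_ne]
    rintro rfl
    exact hp hq
  rcases hcase with ⟨k₁, k₂⟩ | ⟨k₁, k₂⟩
  · obtain ⟨g₁', c₁', h₁'⟩ := h₁.exists_insert hp fy₁ fx₁ k₁
    obtain ⟨g₂', c₂', h₂'⟩ := h₂.exists_insert hp fy₂ fz₂ k₂
    refine ⟨_, _, g₁', g₂', c₁', c₂', h₁', h₂', fun q hq => ?_⟩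
    rcases Finset.mem_insert.1 hq with rfl | hq
    · simp
    · simpa only [hupd _ _ q hq] using hd q hq
  · obtain ⟨g₁', c₁', h₁'⟩ := h₁.exists_insert hp fy₁ fz₁ k₁
    obtain ⟨g₂', c₂', h₂'⟩ := h₂.exists_insert hp fy₂ fx₂ k₂
    refine ⟨_, _, g₁', g₂', c₁', c₂', h₁', h₂', fun q hq => ?_⟩
    rcases Finset.mem_insert.1 hq with rfl | hq
    · simp
    · simpa only [hupd _ _ q hq] using hd q hq

lemma splitBalanced_of_disjoint (hinv : ∀ v, m (m v) = v) (hfix : ∀ v, m v ≠ v)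
    (hx : ∀ p, own (x p) = p) (hy : ∀ p, own (y p) = p) (hz : ∀ p, own (z p) = p)
    (hne : ∀ p, x p ≠ y p ∧ y p ≠ z p ∧ x p ≠ z p) (T : Finset ι)
    (hT : ∀ p ∈ T, m (y p) ≠ x p ∧ m (y p) ≠ z p) (g₀ : W → Bool) (hg₀ : ∀ v, g₀ (m v) = !g₀ v) :
    SplitBalanced m x y z T := by
  have hends : ∀ S : Finset ι, ∀ q ∈ S, x q ≠ y q ∧ z q ≠ y q ∧ x q ≠ z q :=
    fun S q _ => ⟨(hne q).1, (hne q).2.1.symm, (hne q).2.2⟩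
  have hyend : ∀ p q, x p ≠ y q ∧ z p ≠ y q := by
    intro p q
    constructor
    · intro h
      have : p = q := by rw [← hx p, h, hy]
      subst this
      exact (hne p).1 h
    · intro h
      have : p = q := by rw [← hz p, h, hy]
      subst this
      exact (hne p).2.1 h.symm
  set T' := T.filter fun p => ∃ q ∈ T, m (y p) = y q with hT'
  have first : ∀ S ⊆ T', SplitBalanced m x y z S := by
    intro S
    induction S using Finset.induction_on with
    | empty =>
      intro _
      have hb : Balanced m y (∅ : Finset ι) x g₀ (fun v => if g₀ v then v else m v) := by
        refine ⟨hg₀, fun v => ?_, by simp, fun a b e _ _ _ hab hbe => ?_⟩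
        · have := hg₀ v
          have := hinv v
          grind
        · have ha := hinv a
          have hb := hinv b
          have he := hinv e
          grind
      exact ⟨x, x, g₀, g₀, _, _, hb, hb, by simp⟩
    | insert p S hp ih =>
      intro hS
      have hpT := Finset.mem_filter.1 (hS (Finset.mem_insert_self _ _))
      refine (ih fun q hq => hS (Finset.mem_insert_of_mem hq)).insert hinv hfix hx hy hz hp
        (hne p).1 (hne p).2.1 (hne p).2.2 (hT p hpT.1).1 (hT p hpT.1).2 (Or.inr ?_) (hends S)
      intro q hq
      obtain ⟨-, r, -, hr⟩ := Finset.mem_filter.1 (hS (Finset.mem_insert_of_mem hq))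
      constructor
      · intro h
        rw [← h, hinv] at hr
        exact (hyend p r).1 hr
      · intro h
        rw [← h, hinv] at hr
        exact (hyend p r).2 hr
  have second : ∀ S ⊆ T \ T', SplitBalanced m x y z (S ∪ T') := by
    intro S
    induction S using Finset.induction_on with
    | empty =>
      intro _
      simpa using first T' subset_rfl
    | insert p S hp ih =>
      intro hS
      obtain ⟨hpT, hpT'⟩ := Finset.mem_sdiff.1 (hS (Finset.mem_insert_self _ _))
      rw [Finset.insert_union]
      refine (ih fun q hq => hS (Finset.mem_insert_of_mem hq)).insert hinv hfix hx hy hz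
        (by simp [hp, hpT']) (hne p).1 (hne p).2.1 (hne p).2.2 (hT p hpT).1 (hT p hpT).2
        (Or.inl ?_) (hends _)
      intro q hq h
      refine hpT' (Finset.mem_filter.2 ⟨hpT, q, ?_, h⟩)
      rcases Finset.mem_union.1 hq with hq | hq
      · exact (Finset.mem_sdiff.1 (hS (Finset.mem_insert_of_mem hq))).1
      · exact (Finset.mem_filter.1 hq).1
  have := second (T \ T') subset_rfl
  rwa [Finset.sdiff_union_of_subset (Finset.filter_subset _ _)] at this

lemma Balanced.exists_union (hfix : ∀ v, m v ≠ v) (hy : ∀ p, own (y p) = p) {S D : Finset ι}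
    {d e : ι → W} (hSD : ∀ p ∈ D, p ∉ S) (hd : ∀ p ∈ S, own (d p) = p)
    (he : ∀ p ∈ D, own (e p) = p ∧ e p ≠ y p ∧ m (y p) ≠ e p ∧ m (e p) ≠ y p)
    (hfree : ∀ p ∈ D, (∀ q, m (y p) ≠ y q ∧ (q ∈ S → m (y p) ≠ d q) ∧ (q ∈ D → m (y p) ≠ e q)) ∨
      (∀ q, m (e p) ≠ y q ∧ (q ∈ S → m (e p) ≠ d q) ∧ (q ∈ D → m (e p) ≠ e q)))
    {g : W → Bool} {c : W → W} (h : Balanced m y S d g c) :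
    ∃ g' : W → Bool, (∀ v, g' (m v) = !g' v) ∧ (∀ p ∈ S, g' (y p) = g' (d p)) ∧
      ∀ p ∈ D, g' (y p) = g' (e p) := by
  have main : ∀ D' ⊆ D, ∃ d' g' c', Balanced m y (D' ∪ S) d' g' c' ∧ (∀ p ∈ S, d' p = d p) ∧
      ∀ p ∈ D', d' p = e p := by
    intro D'
    induction D' using Finset.induction_on with
    | empty =>
      intro _
      exact ⟨d, g, c, by simpa using h, by simp, by simp⟩
    | insert p D' hp ih =>
      intro hD
      obtain ⟨d', g', c', hb, h1, h2⟩ := ih fun q hq => hD (Finset.mem_insert_of_mem hq)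
      have hpD := hD (Finset.mem_insert_self _ _)
      have hpn : p ∉ D' ∪ S := by simp [hp, hSD p hpD]
      have howns : ∀ q ∈ D' ∪ S, own (d' q) = q := by
        intro q hq
        rcases Finset.mem_union.1 hq with hq | hq
        · rw [h2 q hq]
          exact (he q (hD (Finset.mem_insert_of_mem hq))).1
        · rw [h1 q hq]
          exact hd q hq
      have free : ∀ v, own v = p → ∀ q ∈ D' ∪ S, v ≠ y q ∧ v ≠ d' q := by
        intro v hv q hq
        have := howns q hq
        have := hy q
        grind
      obtain ⟨e1, e2, e3, e4⟩ := he p hpD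
      have hlab : c' (y p) ≠ c' (e p) := by
        have conv : ∀ v, (∀ q, v ≠ y q ∧ (q ∈ S → v ≠ d q) ∧ (q ∈ D → v ≠ e q)) →
            ∀ q ∈ D' ∪ S, v ≠ y q ∧ v ≠ d' q := by
          intro v hv q hq
          refine ⟨(hv q).1, ?_⟩
          rcases Finset.mem_union.1 hq with hq | hq
          · rw [h2 q hq]
            exact (hv q).2.2 (hD (Finset.mem_insert_of_mem hq))
          · rw [h1 q hq]
            exact (hv q).2.1 hq
        rcases hfree p hpD with hf | hf
        · exact hb.label_ne hfix (free _ (hy p)) (free _ e1) (conv _ hf) e2.symm e3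
        · exact (hb.label_ne hfix (free _ e1) (free _ (hy p)) (conv _ hf) e2 e4).symm
      obtain ⟨g'', c'', hb'⟩ := hb.exists_insert hpn (free _ (hy p)) (free _ e1) hlab
      refine ⟨Function.update d' p (e p), g'', c'', ?_, fun q hq => ?_, fun q hq => ?_⟩
      · rwa [Finset.insert_union]
      · rw [Function.update_of_ne, h1 q hq]
        rintro rfl
        exact hSD _ hpD hq
      · rcases Finset.mem_insert.1 hq with rfl | hq'
        · simp
        · rw [Function.update_of_ne, h2 q hq']
          rintro rfl
          exact hp hq'
  obtain ⟨d', g', c', hb, h1, h2⟩ := main D subset_rfl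
  refine ⟨g', hb.alt, fun p hp => ?_, fun p hp => ?_⟩
  · rw [← h1 p hp]
    exact (hb.pair p (Finset.mem_union_right _ hp)).1
  · rw [← h2 p hp]
    exact (hb.pair p (Finset.mem_union_left _ hp)).1

end Split

/-- The 3-paths of `P` are pairwise disjoint and cover exactly the vertices of `S`. -/
def Packs (P : Finset (P3 V)) (S : Finset V) : Prop :=
  (∀ p ∈ P, ∀ q ∈ P, p ≠ q → Disjoint p.verts q.verts) ∧
  ∀ v, v ∈ S ↔ ∃ p ∈ P, v ∈ p.verts

lemma P3.mem_verts {p : P3 V} {v : V} : v ∈ p.verts ↔ v = p.x ∨ v = p.y ∨ v = p.z := by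
  simp [P3.verts]

lemma P3.card_verts (p : P3 V) : p.verts.card = 3 := by
  unfold P3.verts
  rw [Finset.card_insert_of_notMem, Finset.card_pair p.hyz]
  simp [p.hxy, p.hxz]

lemma Packs.isPacking {P : Finset (P3 V)} (h : Packs P univ) : IsPacking P := by
  refine ⟨?_, h.1, fun v => (h.2 v).1 (mem_univ v)⟩
  have hu : (univ : Finset V) = P.biUnion P3.verts := by
    ext v
    simpa using h.2 v
  have hc : Fintype.card V = P.card * 3 := by
    rw [← Finset.card_univ, hu, Finset.card_biUnion h.1, Finset.sum_const_nat]
    exact fun p _ => p.card_verts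
  omega

lemma Packs.insert (w : Sym2 V → ℝ) {P : Finset (P3 V)} {S S' : Finset V} (h : Packs P S)
    (p : P3 V) (hp : ∀ v ∈ p.verts, v ∉ S) (hS' : ∀ v, v ∈ S' ↔ v ∈ p.verts ∨ v ∈ S) :
    Packs (insert p P) S' ∧ pw w (insert p P) = p.wt w + pw w P := by
  have hd : ∀ q ∈ P, Disjoint p.verts q.verts := by
    intro q hq
    rw [Finset.disjoint_left]
    exact fun v hv hvq => hp v hv ((h.2 v).2 ⟨q, hq, hvq⟩)
  refine ⟨⟨?_, fun v => ?_⟩, ?_⟩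
  · intro a ha b hb hab
    rw [Finset.mem_insert] at ha hb
    rcases ha with rfl | ha <;> rcases hb with rfl | hb
    · exact absurd rfl hab
    · exact hd b hb
    · exact (hd a ha).symm
    · exact h.1 a ha b hb hab
  · rw [hS', h.2]
    simp
  · unfold pw
    refine Finset.sum_insert fun hmem => ?_
    exact hp p.x (by simp [P3.mem_verts]) ((h.2 _).2 ⟨p, hmem, by simp [P3.mem_verts]⟩)

/-- The gain of the edge `s(u, v)`: its weight, minus the lighter of the two edges `s(u, m u)` and
`s(v, m v)` when both endpoints lie in `C`. -/
noncomputable def gain (w : Sym2 V → ℝ) (m : V → V) (C : Finset V) (u v : V) : ℝ :=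
  w s(u, v) - if u ∈ C ∧ v ∈ C then min (w s(u, m u)) (w s(v, m v)) else 0

/-- The edges `s(a i, b i)`, `i ∈ A`, become a matching after contracting all edges `s(v, m v)`. -/
structure ContractedMatching {ι : Type*} (m : V → V) (C U : Finset V) (A : Finset ι)
    (a b : ι → V) : Prop where
  left : ∀ i ∈ A, a i ∈ C
  right : ∀ i ∈ A, b i ∈ C ∨ b i ∈ U
  ne : ∀ i ∈ A, a i ≠ b i ∧ b i ≠ m (a i)
  disj : ∀ i ∈ A, ∀ j ∈ A, i ≠ j → ∀ u v, (u = a i ∨ u = b i) → (v = a j ∨ v = b j) →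
    u ≠ v ∧ u ≠ m v

lemma exists_packs_remove_edge {ι : Type*} {w : Sym2 V → ℝ} {m : V → V}
    (hinv : ∀ v, m (m v) = v) {C U : Finset V} (hC : ∀ v ∈ C, m v ∈ C ∧ m v ≠ v)
    (hU : ∀ v ∈ U, v ∉ C) (hcard : 2 * U.card = C.card) {A : Finset ι} {a b : ι → V}
    (hA : ContractedMatching m C U A a b) {s t : V} (hs : s ∈ C) (ht : t ∈ U)
    (hdisj : ∀ i ∈ A, a i ≠ s ∧ a i ≠ m s ∧ b i ≠ s ∧ b i ≠ m s ∧ b i ≠ t)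
    (ih : ∀ (C' U' : Finset V), U'.card < U.card → (∀ v ∈ C', m v ∈ C' ∧ m v ≠ v) →
      (∀ v ∈ U', v ∉ C') → 2 * U'.card = C'.card → ContractedMatching m C' U' A a b →
      ∃ P, Packs P (C' ∪ U') ∧
        (1 / 2) * ∑ v ∈ C', w s(v, m v) + ∑ i ∈ A, gain w m C' (a i) (b i) ≤ pw w P) :
    ∃ P, Packs P (C ∪ U) ∧
      (1 / 2) * ∑ v ∈ C, w s(v, m v) + (∑ i ∈ A, gain w m C (a i) (b i)) + w s(s, t) ≤ pw w P := by
  obtain ⟨hms, hmss⟩ := hC s hs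
  have htC := hU t ht
  have hts : t ≠ s := by rintro rfl; exact htC hs
  have htm : m s ≠ t := by rintro rfl; exact htC hms
  have memC : ∀ v, v ∈ (C.erase s).erase (m s) ↔ v ≠ m s ∧ v ≠ s ∧ v ∈ C := by simp
  have hmsE : m s ∈ C.erase s := Finset.mem_erase.2 ⟨hmss, hms⟩
  have hposU : 0 < U.card := Finset.card_pos.2 ⟨t, ht⟩
  have c1 := Finset.card_erase_of_mem hmsE
  have c2 := Finset.card_erase_of_mem hs
  have c3 := Finset.card_erase_of_mem ht
  have hA' : ContractedMatching m ((C.erase s).erase (m s)) (U.erase t) A a b := by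
    refine ⟨fun i hi => ?_, fun i hi => ?_, hA.ne, hA.disj⟩
    · obtain ⟨h1, h2, -⟩ := hdisj i hi
      exact (memC _).2 ⟨h2, h1, hA.left i hi⟩
    · obtain ⟨-, -, h3, h4, h5⟩ := hdisj i hi
      rcases hA.right i hi with h | h
      · exact Or.inl ((memC _).2 ⟨h4, h3, h⟩)
      · exact Or.inr (Finset.mem_erase.2 ⟨h5, h⟩)
  obtain ⟨P, hP, hle⟩ := ih ((C.erase s).erase (m s)) (U.erase t) (by omega)
    (fun v hv => by
      obtain ⟨h1, h2, h3⟩ := (memC v).1 hv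
      refine ⟨(memC _).2 ⟨fun h => h2 ?_, fun h => h1 ?_, (hC v h3).1⟩, (hC v h3).2⟩
      · rw [← hinv v, h, hinv]
      · rw [← h, hinv])
    (fun v hv hv' => hU v (Finset.mem_of_mem_erase hv) ((memC v).1 hv').2.2) (by omega) hA'
  obtain ⟨hP', hpw⟩ := hP.insert w ⟨m s, s, t, hmss, hts.symm, htm⟩ (S' := C ∪ U)
    (by
      intro v hv
      rw [P3.mem_verts] at hv
      rw [Finset.mem_union, memC, Finset.mem_erase]
      rcases hv with rfl | rfl | rfl
      · rintro (h | h)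
        · exact h.1 rfl
        · exact hU _ h.2 hms
      · rintro (h | h)
        · exact h.2.1 rfl
        · exact hU _ h.2 hs
      · rintro (h | h)
        · exact htC h.2.2
        · exact h.1 rfl)
    (by
      intro v
      rw [P3.mem_verts, Finset.mem_union, Finset.mem_union, memC, Finset.mem_erase]
      by_cases h1 : v = m s
      · simp [h1, hms]
      by_cases h2 : v = s
      · simp [h2, hs]
      by_cases h3 : v = t
      · simp [h3, ht]
      simp [h1, h2, h3])
  refine ⟨_, hP', ?_⟩
  rw [hpw]
  have hsum : ∑ v ∈ C, w s(v, m v) =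
      w s(s, m s) + (w s(m s, m (m s)) + ∑ v ∈ (C.erase s).erase (m s), w s(v, m v)) := by
    rw [Finset.add_sum_erase _ (fun v => w s(v, m v)) hmsE,
      Finset.add_sum_erase _ (fun v => w s(v, m v)) hs]
  have hgain : ∑ i ∈ A, gain w m ((C.erase s).erase (m s)) (a i) (b i) =
      ∑ i ∈ A, gain w m C (a i) (b i) := by
    refine Finset.sum_congr rfl fun i hi => ?_
    obtain ⟨h1, h2, h3, h4, -⟩ := hdisj i hi
    simp [gain, h1, h2, h3, h4]
  have hwt : P3.wt w ⟨m s, s, t, hmss, hts.symm, htm⟩ = w s(s, m s) + w s(s, t) := by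
    simp only [P3.wt]
    rw [Sym2.eq_swap (a := m s)]
  rw [hinv, Sym2.eq_swap (a := m s)] at hsum
  rw [hgain] at hle
  rw [hwt, hsum]
  linarith

lemma exists_packs_of_contractedMatching {ι : Type*} {w : Sym2 V → ℝ} (hw : ∀ e, 0 ≤ w e)
    {m : V → V} (hinv : ∀ v, m (m v) = v) {a b : ι → V} (k : ℕ) :
    ∀ (C U : Finset V) (A : Finset ι), U.card = k → (∀ v ∈ C, m v ∈ C ∧ m v ≠ v) →
      (∀ v ∈ U, v ∉ C) → 2 * U.card = C.card → ContractedMatching m C U A a b →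
      ∃ P, Packs P (C ∪ U) ∧
        (1 / 2) * ∑ v ∈ C, w s(v, m v) + ∑ i ∈ A, gain w m C (a i) (b i) ≤ pw w P := by
  induction k using Nat.strong_induction_on with
  | _ k ih =>
  intro C U A hk hC hU hcard hA
  have ih' : ∀ (A' : Finset ι) (C' U' : Finset V), U'.card < U.card →
      (∀ v ∈ C', m v ∈ C' ∧ m v ≠ v) → (∀ v ∈ U', v ∉ C') → 2 * U'.card = C'.card →
      ContractedMatching m C' U' A' a b → ∃ P, Packs P (C' ∪ U') ∧
        (1 / 2) * ∑ v ∈ C', w s(v, m v) + ∑ i ∈ A', gain w m C' (a i) (b i) ≤ pw w P :=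
    fun A' C' U' h => ih _ (hk ▸ h) C' U' A' rfl
  have hErase : ∀ i, ContractedMatching m C U (A.erase i) a b := fun i =>
    ⟨fun j hj => hA.left j (Finset.mem_of_mem_erase hj),
      fun j hj => hA.right j (Finset.mem_of_mem_erase hj),
      fun j hj => hA.ne j (Finset.mem_of_mem_erase hj),
      fun j hj l hl => hA.disj j (Finset.mem_of_mem_erase hj) l (Finset.mem_of_mem_erase hl)⟩
  by_cases hout : ∃ i ∈ A, b i ∈ U
  · obtain ⟨i, hi, hbi⟩ := hout
    obtain ⟨P, hP, hle⟩ := exists_packs_remove_edge hinv hC hU hcard (hErase i) (hA.left i hi) hbi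
      (fun j hj => by
        obtain ⟨hji, hj⟩ := Finset.mem_erase.1 hj
        have hd := hA.disj j hj i hi hji
        exact ⟨(hd _ _ (Or.inl rfl) (Or.inl rfl)).1, (hd _ _ (Or.inl rfl) (Or.inl rfl)).2,
          (hd _ _ (Or.inr rfl) (Or.inl rfl)).1, (hd _ _ (Or.inr rfl) (Or.inl rfl)).2,
          (hd _ _ (Or.inr rfl) (Or.inr rfl)).1⟩) (ih' _)
    refine ⟨P, hP, le_trans ?_ hle⟩
    rw [← Finset.add_sum_erase A _ hi]
    have : gain w m C (a i) (b i) = w s(a i, b i) := by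
      simp [gain, hU _ hbi]
    linarith
  by_cases hne : A.Nonempty
  · obtain ⟨i, hi⟩ := hne
    have hAC : ∀ j ∈ A, b j ∈ C := fun j hj =>
      (hA.right j hj).resolve_right fun h => hout ⟨j, hj, h⟩
    -- orient the edge so that the lighter of the two contracted edges is at `v`
    obtain ⟨u, v, hu, hv, huv, hvmu, hmin, hgain, hdis⟩ : ∃ u v, u ∈ C ∧ v ∈ C ∧ u ≠ v ∧ v ≠ m u ∧
        w s(v, m v) = min (w s(a i, m (a i))) (w s(b i, m (b i))) ∧
        gain w m C (a i) (b i) + w s(v, m v) = w s(u, v) ∧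
        ∀ r, (r ≠ a i ∧ r ≠ m (a i)) → (r ≠ b i ∧ r ≠ m (b i)) →
          (r ≠ u ∧ r ≠ m u) ∧ (r ≠ v ∧ r ≠ m v) := by
      obtain ⟨n1, n2⟩ := hA.ne i hi
      have ha := hA.left i hi
      have hb := hAC i hi
      rcases le_total (w s(b i, m (b i))) (w s(a i, m (a i))) with h | h
      · exact ⟨a i, b i, ha, hb, n1, n2, (min_eq_right h).symm,
          by simp [gain, ha, hb, min_eq_right h], fun r h1 h2 => ⟨h1, h2⟩⟩
      · refine ⟨b i, a i, hb, ha, n1.symm, fun hh => n2 (by rw [hh, hinv]),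
          (min_eq_left h).symm, ?_, fun r h1 h2 => ⟨h2, h1⟩⟩
        rw [Sym2.eq_swap (a := b i)]
        simp [gain, ha, hb, min_eq_left h]
    have hmu := hC u hu
    have hmv := hC v hv
    have hinj : ∀ p q, m p = m q → p = q := fun p q h => by rw [← hinv p, h, hinv]
    have humv : u ≠ m v := fun h => hvmu (by rw [h, hinv])
    have hmuv : m u ≠ m v := fun h => huv (hinj _ _ h)
    have e1 : m u ∈ C.erase u := Finset.mem_erase.2 ⟨hmu.2, hmu.1⟩
    have e2 : v ∈ (C.erase u).erase (m u) := by simp [hvmu, huv.symm, hv]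
    have e3 : m v ∈ ((C.erase u).erase (m u)).erase v := by
      simp [hmv.2, hmuv.symm, humv.symm, hmv.1]
    have c1 := Finset.card_erase_of_mem hu
    have c2 := Finset.card_erase_of_mem e1
    have c3 := Finset.card_erase_of_mem e2
    have c4 := Finset.card_erase_of_mem e3
    have p3 := Finset.card_pos.2 ⟨_, e3⟩
    obtain ⟨s, hs⟩ : U.Nonempty := Finset.card_pos.1 (by omega)
    have d1 := Finset.card_erase_of_mem hs
    obtain ⟨t, ht⟩ : (U.erase s).Nonempty := Finset.card_pos.1 (by omega)
    have d2 := Finset.card_erase_of_mem ht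
    obtain ⟨hts, htU⟩ := Finset.mem_erase.1 ht
    set C' := (((C.erase u).erase (m u)).erase v).erase (m v) with hC'
    have memC : ∀ r, r ∈ C' ↔ (r ≠ u ∧ r ≠ m u) ∧ (r ≠ v ∧ r ≠ m v) ∧ r ∈ C := by
      intro r
      simp only [hC', Finset.mem_erase]
      tauto
    have memU : ∀ r, r ∈ (U.erase s).erase t ↔ r ≠ t ∧ r ≠ s ∧ r ∈ U := by simp
    have hsC := hU s hs
    have htC := hU t htU
    have neC : ∀ r ∈ C, r ≠ s ∧ r ≠ t := by
      intro r hr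
      constructor <;> rintro rfl <;> contradiction
    have hAi : ∀ j ∈ A.erase i, ∀ r, (r = a j ∨ r = b j) →
        (r ≠ u ∧ r ≠ m u) ∧ (r ≠ v ∧ r ≠ m v) := by
      intro j hj r hr
      obtain ⟨hji, hj⟩ := Finset.mem_erase.1 hj
      have hd := hA.disj j hj i hi hji
      exact hdis r (hd r _ hr (Or.inl rfl)) (hd r _ hr (Or.inr rfl))
    have hA' : ContractedMatching m C' ((U.erase s).erase t) (A.erase i) a b := by
      refine ⟨fun j hj => (memC _).2 ?_, fun j hj => Or.inl ((memC _).2 ?_),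
        (hErase i).ne, (hErase i).disj⟩
      · obtain ⟨h1, h2⟩ := hAi j hj _ (Or.inl rfl)
        exact ⟨h1, h2, (hErase i).left j hj⟩
      · obtain ⟨h1, h2⟩ := hAi j hj _ (Or.inr rfl)
        exact ⟨h1, h2, hAC j (Finset.mem_of_mem_erase hj)⟩
    obtain ⟨P, hP, hle⟩ := ih' (A.erase i) C' ((U.erase s).erase t) (by omega)
      (fun r hr => by
        obtain ⟨h1, h2, h3⟩ := (memC r).1 hr
        refine ⟨(memC _).2 ⟨⟨fun h => h1.2 ?_, fun h => h1.1 (hinj _ _ h)⟩,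
          ⟨fun h => h2.2 ?_, fun h => h2.1 (hinj _ _ h)⟩, (hC r h3).1⟩, (hC r h3).2⟩
        · rw [← h, hinv]
        · rw [← h, hinv])
      (fun r hr hr' => hU r ((memU r).1 hr).2.2 ((memC r).1 hr').2.2) (by omega) hA'
    obtain ⟨hP1, hpw1⟩ := hP.insert w
      ⟨m v, s, t, (neC _ hmv.1).1, hts.symm, (neC _ hmv.1).2⟩
      (S' := insert (m v) (insert s (insert t (C' ∪ (U.erase s).erase t))))
      (by
        intro r hr
        rw [P3.mem_verts] at hr
        rw [Finset.mem_union, memC, memU]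
        rcases hr with rfl | rfl | rfl
        · rintro (h | h)
          · exact h.2.1.2 rfl
          · exact hU _ h.2.2 hmv.1
        · rintro (h | h)
          · exact hsC h.2.2
          · exact h.2.1 rfl
        · rintro (h | h)
          · exact htC h.2.2
          · exact h.1 rfl)
      (by
        intro r
        rw [P3.mem_verts]
        simp only [Finset.mem_insert]
        tauto)
    obtain ⟨hP2, hpw2⟩ := hP1.insert w ⟨m u, u, v, hmu.2, huv, hvmu.symm⟩ (S' := C ∪ U)
      (by
        intro r hr
        rw [P3.mem_verts] at hr
        simp only [Finset.mem_insert, Finset.mem_union, memC, memU]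
        have hrC : r ∈ C := by rcases hr with rfl | rfl | rfl <;> simp only [*]
        have := neC r hrC
        have hrU : r ∉ U := fun h => hU r h hrC
        have : r ≠ m v := by
          rcases hr with rfl | rfl | rfl
          · exact hmuv
          · exact humv
          · exact hmv.2.symm
        simp only at hr
        tauto)
      (by
        intro r
        rw [P3.mem_verts]
        simp only [Finset.mem_insert, Finset.mem_union, memC, memU]
        by_cases h1 : r = u
        · simp [h1, hu]
        by_cases h2 : r = m u
        · simp [h2, hmu.1]
        by_cases h3 : r = v
        · simp [h3, hv]
        by_cases h4 : r = m v
        · simp [h4, hmv.1]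
        by_cases h5 : r = s
        · simp [h5, hs]
        by_cases h6 : r = t
        · simp [h6, htU]
        simp [h1, h2, h3, h4, h5, h6])
    refine ⟨_, hP2, ?_⟩
    rw [hpw2, hpw1]
    have hsum : ∑ r ∈ C, w s(r, m r) = w s(u, m u) + (w s(m u, m (m u)) + (w s(v, m v) +
        (w s(m v, m (m v)) + ∑ r ∈ C', w s(r, m r)))) := by
      rw [Finset.add_sum_erase _ (fun v => w s(v, m v)) e3,
        Finset.add_sum_erase _ (fun v => w s(v, m v)) e2,
        Finset.add_sum_erase _ (fun v => w s(v, m v)) e1,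
        Finset.add_sum_erase _ (fun v => w s(v, m v)) hu]
    have hgains : ∑ j ∈ A.erase i, gain w m C' (a j) (b j) =
        ∑ j ∈ A.erase i, gain w m C (a j) (b j) := by
      refine Finset.sum_congr rfl fun j hj => ?_
      have h1 := hA'.left j hj
      have h2 : b j ∈ C' := by
        obtain ⟨h1, h2⟩ := hAi j hj _ (Or.inr rfl)
        exact (memC _).2 ⟨h1, h2, hAC j (Finset.mem_of_mem_erase hj)⟩
      simp only [gain, h1, h2, ((memC _).1 h1).2.2, ((memC _).1 h2).2.2]
    have hwt : P3.wt w ⟨m u, u, v, hmu.2, huv, hvmu.symm⟩ = w s(u, m u) + w s(u, v) := by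
      simp only [P3.wt]
      rw [Sym2.eq_swap (a := m u)]
    have hwt' : 0 ≤ P3.wt w ⟨m v, s, t, (neC _ hmv.1).1, hts.symm, (neC _ hmv.1).2⟩ :=
      add_nonneg (hw _) (hw _)
    rw [hinv, hinv, Sym2.eq_swap (a := m u), Sym2.eq_swap (a := m v)] at hsum
    rw [hgains] at hle
    rw [hwt, hsum, ← Finset.add_sum_erase A _ hi]
    linarith
  · rw [Finset.not_nonempty_iff_eq_empty] at hne
    subst hne
    rcases U.eq_empty_or_nonempty with rfl | ⟨t, ht⟩
    · have : C = ∅ := Finset.card_eq_zero.1 (by simpa using hcard.symm)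
      subst this
      exact ⟨∅, ⟨by simp, by simp⟩, by simp [pw]⟩
    · have := Finset.card_pos.2 ⟨t, ht⟩
      obtain ⟨s, hs⟩ : C.Nonempty := Finset.card_pos.1 (by omega)
      obtain ⟨P, hP, hle⟩ := exists_packs_remove_edge hinv hC hU hcard hA hs ht (by simp)
        (ih' _)
      refine ⟨P, hP, le_trans ?_ hle⟩
      have := hw s(s, t)
      linarith

lemma exists_alternating {W : Type*} {m : W → W} (hinv : ∀ v, m (m v) = v) (hfix : ∀ v, m v ≠ v) :
    ∃ g : W → Bool, ∀ v, g (m v) = !g v := by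
  refine ⟨fun v => decide (v = (Quot.out s(v, m v)).1), fun v => ?_⟩
  have hs : s(m v, m (m v)) = s(v, m v) := by rw [hinv, Sym2.eq_swap]
  have hmem : (Quot.out s(v, m v)).1 ∈ s(v, m v) := Sym2.out_fst_mem _
  change decide (m v = (Quot.out s(m v, m (m v))).1) = !decide (v = (Quot.out s(v, m v)).1)
  rw [hs]
  have := hfix v
  rcases Sym2.mem_iff.1 hmem with h | h
  · rw [h]
    simp [this]
  · rw [h]
    simp [this.symm]

lemma exists_mate {M : Finset (Sym2 V)} (hM : IsMatching M) :
    ∃ m : V → V, (∀ v, m (m v) = v) ∧ (∀ v, covered M v ↔ m v ≠ v) ∧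
      ∀ u v, s(u, v) ∈ M ↔ u ≠ v ∧ m u = v := by
  have hex : ∀ u, ∃ t, (covered M u → s(u, t) ∈ M) ∧ (¬ covered M u → t = u) := by
    intro u
    by_cases h : covered M u
    · obtain ⟨e, he, hu⟩ := id h
      obtain ⟨t, rfl⟩ := Sym2.mem_iff_exists.1 hu
      exact ⟨t, fun _ => he, fun h' => absurd h h'⟩
    · exact ⟨u, fun h' => absurd h' h, fun _ => rfl⟩
  choose m hm hm' using hex
  have hne : ∀ u v, s(u, v) ∈ M → u ≠ v := fun u v h => by
    simpa using hM.1 _ h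
  have huniq : ∀ u v t, s(u, v) ∈ M → s(u, t) ∈ M → v = t := by
    intro u v t h1 h2
    have : s(u, v) = s(u, t) := by
      by_contra hcon
      exact hM.2 _ h1 _ h2 hcon u (Sym2.mem_mk_left _ _) (Sym2.mem_mk_left _ _)
    exact Sym2.congr_right.1 this
  have hmk : ∀ u v, s(u, v) ∈ M → m u = v := fun u v h =>
    huniq u _ _ (hm u ⟨_, h, Sym2.mem_mk_left _ _⟩) h
  have hcov : ∀ v, covered M v ↔ m v ≠ v := fun v =>
    ⟨fun h => (hne _ _ (hm v h)).symm, fun h => by_contra fun hc => h (hm' v hc)⟩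
  refine ⟨m, fun v => ?_, hcov, fun u v => ⟨fun h => ⟨hne u v h, hmk u v h⟩, ?_⟩⟩
  · by_cases h : covered M v
    · exact hmk _ _ (by rw [Sym2.eq_swap]; exact hm v h)
    · rw [hm' v h, hm' v h]
  · rintro ⟨huv, rfl⟩
    exact hm u ((hcov u).2 huv.symm)

lemma covered_filter_eq (M : Finset (Sym2 V)) :
    univ.filter (covered M) = M.biUnion Sym2.toFinset := by
  ext v
  simp [covered]

lemma IsMatching.pairwiseDisjoint {M : Finset (Sym2 V)} (hM : IsMatching M) :
    (M : Set (Sym2 V)).PairwiseDisjoint Sym2.toFinset := by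
  intro e he f hf hef
  rw [Function.onFun, Finset.disjoint_left]
  intro v hv hv'
  exact hM.2 e he f hf hef v (Sym2.mem_toFinset.1 hv) (Sym2.mem_toFinset.1 hv')

lemma IsMatching.card_covered {M : Finset (Sym2 V)} (hM : IsMatching M) :
    (univ.filter (covered M)).card = 2 * M.card := by
  rw [covered_filter_eq, Finset.card_biUnion hM.pairwiseDisjoint,
    Finset.sum_const_nat fun e he => Sym2.card_toFinset_of_not_isDiag e (hM.1 e he), mul_comm]

lemma IsMatching.sum_covered {M : Finset (Sym2 V)} (hM : IsMatching M) {m : V → V}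
    (hm : ∀ u v, s(u, v) ∈ M ↔ u ≠ v ∧ m u = v) (w : Sym2 V → ℝ) (h : V → ℝ) :
    ∑ v ∈ univ.filter (covered M), h v * w s(v, m v) =
      ∑ f ∈ M, (∑ v ∈ f.toFinset, h v) * w f := by
  rw [covered_filter_eq, Finset.sum_biUnion hM.pairwiseDisjoint]
  refine Finset.sum_congr rfl fun f hf => ?_
  rw [Finset.sum_mul]
  refine Finset.sum_congr rfl fun v hv => ?_
  obtain ⟨t, rfl⟩ := Sym2.mem_iff_exists.1 (Sym2.mem_toFinset.1 hv)
  rw [((hm v t).1 hf).2]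

lemma kcnt_eq (M : Finset (Sym2 V)) (p : P3 V) :
    kcnt M p = (if covered M p.x then 1 else 0) + (if covered M p.y then 1 else 0) +
      (if covered M p.z then 1 else 0) := by
  have h1 := p.hxy
  have h2 := p.hyz
  have h3 := p.hxz
  unfold kcnt P3.verts
  rw [Finset.card_filter, Finset.sum_insert (by simp [h1, h3]), Finset.sum_pair h2, add_assoc]

/-- The endpoint of `p` other than `p.y` on its selected edge, for classes 2, 3, 4, 5 and 7. -/
noncomputable def outer (w : Sym2 V → ℝ) (M : Finset (Sym2 V)) (p : P3 V) : V :=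
  if cls2 M p then (if covered M p.x then p.x else p.z)
  else if cls3 M p ∨ cls4 M p then (if w s(p.y, p.z) ≤ w s(p.x, p.y) then p.x else p.z)
  else if s(p.x, p.y) ∈ M then p.z else p.x

/-- The share of the weight of the matching edge at `v ∈ p.verts` that is charged to `p`. -/
noncomputable def charge (M : Finset (Sym2 V)) (p : P3 V) (v : V) : ℝ :=
  if cls6 M p ∧ v = p.y then 1 / 12 else if cls6 M p ∨ cls7 M p ∨ cls8 M p then 1 / 6 else 0

lemma charge_le (M : Finset (Sym2 V)) (p : P3 V) (v : V) : charge M p v ≤ 1 / 6 := by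
  unfold charge
  split_ifs <;> norm_num

lemma charge_middle {M : Finset (Sym2 V)} {p : P3 V} (h : cls6 M p) :
    charge M p p.y = 1 / 12 := by
  simp [charge, h]

lemma not_cls678 {M : Finset (Sym2 V)} {p : P3 V}
    (h : (cls2 M p ∨ cls3 M p ∨ cls4 M p) ∨ cls5 M p) : ¬ cls6 M p ∧ ¬ cls7 M p ∧ ¬ cls8 M p := by
  unfold cls2 cls3 cls4 cls5 exOne at h
  unfold cls6 cls7 cls8
  grind

lemma not_cls5 {M : Finset (Sym2 V)} {p : P3 V} (h : cls2 M p ∨ cls3 M p ∨ cls4 M p) :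
    ¬ cls5 M p := by
  unfold cls2 cls3 cls4 at h
  unfold cls5
  grind

lemma charge_eq_zero {M : Finset (Sym2 V)} {p : P3 V}
    (h : (cls2 M p ∨ cls3 M p ∨ cls4 M p) ∨ cls5 M p) (v : V) : charge M p v = 0 := by
  obtain ⟨h6, h7, h8⟩ := not_cls678 h
  simp [charge, h6, h7, h8]

section Mate

variable {M : Finset (Sym2 V)} {m : V → V}

lemma outer_spec (w : Sym2 V → ℝ) (hinv : ∀ v, m (m v) = v) (hcov : ∀ v, covered M v ↔ m v ≠ v)
    (hm : ∀ u v, s(u, v) ∈ M ↔ u ≠ v ∧ m u = v) (p : P3 V) :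
    (outer w M p = p.x ∨ outer w M p = p.z) ∧
    (cls2 M p ∨ cls4 M p → ¬ covered M p.y ∧ covered M (outer w M p)) ∧
    (cls3 M p ∨ cls5 M p → covered M p.y ∧ ¬ covered M (outer w M p)) ∧
    (cls7 M p → covered M p.y ∧ covered M (outer w M p)) ∧
    (cls5 M p ∨ cls7 M p →
      (m p.y = p.x ∨ m p.y = p.z) ∧ m p.y ≠ outer w M p ∧ m (outer w M p) ≠ p.y) ∧
    (cls6 M p ∨ cls8 M p → covered M p.y ∧ m p.y ≠ p.x ∧ m p.y ≠ p.z ∧ m p.x ≠ p.y ∧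
      m p.z ≠ p.y) := by
  have h1 := p.hxy
  have h2 := p.hyz
  have h3 := p.hxz
  have i1 := hinv p.x
  have i2 := hinv p.y
  have i3 := hinv p.z
  have a1 := hm p.x p.y
  have a2 := hm p.y p.z
  have c1 := hcov p.x
  have c2 := hcov p.y
  have c3 := hcov p.z
  unfold outer cls2 cls3 cls4 cls5 cls6 cls7 cls8 exOne
  rw [kcnt_eq]
  clear hinv hcov hm
  refine ⟨by grind, ?_, ?_, ?_, ?_, ?_⟩ <;> grind

lemma gain_comm (w : Sym2 V → ℝ) (m : V → V) (C : Finset V) (u v : V) :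
    gain w m C u v = gain w m C v u := by
  unfold gain
  rw [Sym2.eq_swap, min_comm]
  simp only [and_comm]

end Mate

lemma cls_cases (M : Finset (Sym2 V)) (p : P3 V) :
    (¬ cls2 M p ∧ ¬ cls3 M p ∧ ¬ cls4 M p ∧ ¬ cls5 M p ∧ ¬ cls6 M p ∧ ¬ cls7 M p ∧ ¬ cls8 M p) ∨
    (cls2 M p ∧ ¬ cls3 M p ∧ ¬ cls4 M p ∧ ¬ cls5 M p ∧ ¬ cls6 M p ∧ ¬ cls7 M p ∧ ¬ cls8 M p) ∨
    (¬ cls2 M p ∧ cls3 M p ∧ ¬ cls4 M p ∧ ¬ cls5 M p ∧ ¬ cls6 M p ∧ ¬ cls7 M p ∧ ¬ cls8 M p) ∨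
    (¬ cls2 M p ∧ ¬ cls3 M p ∧ cls4 M p ∧ ¬ cls5 M p ∧ ¬ cls6 M p ∧ ¬ cls7 M p ∧ ¬ cls8 M p) ∨
    (¬ cls2 M p ∧ ¬ cls3 M p ∧ ¬ cls4 M p ∧ cls5 M p ∧ ¬ cls6 M p ∧ ¬ cls7 M p ∧ ¬ cls8 M p) ∨
    (¬ cls2 M p ∧ ¬ cls3 M p ∧ ¬ cls4 M p ∧ ¬ cls5 M p ∧ cls6 M p ∧ ¬ cls7 M p ∧ ¬ cls8 M p) ∨
    (¬ cls2 M p ∧ ¬ cls3 M p ∧ ¬ cls4 M p ∧ ¬ cls5 M p ∧ ¬ cls6 M p ∧ cls7 M p ∧ ¬ cls8 M p) ∨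
    (¬ cls2 M p ∧ ¬ cls3 M p ∧ ¬ cls4 M p ∧ ¬ cls5 M p ∧ ¬ cls6 M p ∧ ¬ cls7 M p ∧ cls8 M p) := by
  unfold cls2 cls3 cls4 cls5 cls6 cls7 cls8 exOne
  by_cases hy : covered M p.y <;> by_cases h1 : s(p.x, p.y) ∈ M <;>
    by_cases h2 : s(p.y, p.z) ∈ M <;> simp [hy, h1, h2] <;> omega

lemma weight_outer (w : Sym2 V → ℝ) {M : Finset (Sym2 V)} {p : P3 V} :
    (cls2 M p → s(p.y, outer w M p) = if covered M p.x then s(p.x, p.y) else s(p.y, p.z)) ∧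
    (cls3 M p ∨ cls4 M p → s(p.y, outer w M p) = heavy w p) ∧
    (cls5 M p ∨ cls7 M p →
      s(p.y, outer w M p) = if s(p.x, p.y) ∈ M then s(p.y, p.z) else s(p.x, p.y)) := by
  have := Sym2.eq_swap (a := p.x) (b := p.y)
  have h := cls_cases M p
  unfold outer heavy
  refine ⟨?_, ?_, ?_⟩ <;> grind

/-- Four times the average gain obtained from `p`. -/
noncomputable def pathGain (w : Sym2 V → ℝ) (M : Finset (Sym2 V)) (m : V → V) (p : P3 V) : ℝ :=
  if cls5 M p then 4 * gain w m (univ.filter (covered M)) p.y (outer w M p)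
  else if cls2 M p ∨ cls3 M p ∨ cls4 M p ∨ cls7 M p then
    2 * gain w m (univ.filter (covered M)) p.y (outer w M p)
  else if cls6 M p ∨ cls8 M p then
    gain w m (univ.filter (covered M)) p.y p.x + gain w m (univ.filter (covered M)) p.y p.z
  else 0

/-- The contribution of `p` to the lower bound. -/
noncomputable def pathValue (w : Sym2 V → ℝ) (M : Finset (Sym2 V)) (p : P3 V) : ℝ :=
  (if cls2 M p then 1 / 2 * w (if covered M p.x then s(p.x, p.y) else s(p.y, p.z)) else 0) +
  (if cls3 M p then 1 / 2 * w (heavy w p) else 0) +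
  (if cls4 M p then 1 / 2 * w (heavy w p) else 0) +
  (if cls5 M p then w (if s(p.x, p.y) ∈ M then s(p.y, p.z) else s(p.x, p.y)) else 0) +
  (if cls7 M p then 1 / 2 * w (if s(p.x, p.y) ∈ M then s(p.y, p.z) else s(p.x, p.y)) else 0) +
  (if cls6 M p then 1 / 4 * p.wt w else 0) + (if cls8 M p then 1 / 4 * p.wt w else 0)

lemma P3.sum_verts (p : P3 V) (h : V → ℝ) : ∑ v ∈ p.verts, h v = h p.x + h p.y + h p.z := by
  unfold P3.verts
  rw [Finset.sum_insert (by simp [p.hxy, p.hxz]), Finset.sum_pair p.hyz, add_assoc]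

lemma gain_eq_weight {w : Sym2 V → ℝ} {m : V → V} {C : Finset V} {u v : V}
    (h : ¬ (u ∈ C ∧ v ∈ C)) : gain w m C u v = w s(u, v) := by
  simp [gain, h]

lemma covered_of_kcnt_eq_three {M : Finset (Sym2 V)} {p : P3 V} (hk : kcnt M p = 3) :
    covered M p.x ∧ covered M p.y ∧ covered M p.z := by
  rw [kcnt_eq] at hk
  split_ifs at hk with h1 h2 h3 <;> first | omega | exact ⟨h1, h2, h3⟩

set_option maxHeartbeats 1000000 in
lemma pathValue_le {w : Sym2 V → ℝ} (hw : ∀ e, 0 ≤ w e) {M : Finset (Sym2 V)} {m : V → V}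
    (hinv : ∀ v, m (m v) = v) (hcov : ∀ v, covered M v ↔ m v ≠ v)
    (hm : ∀ u v, s(u, v) ∈ M ↔ u ≠ v ∧ m u = v) (p : P3 V) :
    pathValue w M p ≤ 1 / 4 * pathGain w M m p +
      ∑ v ∈ p.verts, if covered M v then charge M p v * w s(v, m v) else 0 := by
  obtain ⟨o1, o24, o3, o7, o57, o68⟩ := outer_spec w hinv hcov hm p
  obtain ⟨e2, e34, e57⟩ := weight_outer w (M := M) (p := p)
  have hxy := p.hxy
  have hyz := p.hyz
  have hxz := p.hxz
  have wx := hw s(p.x, m p.x)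
  have wy := hw s(p.y, m p.y)
  have wz := hw s(p.z, m p.z)
  have sw := Sym2.eq_swap (a := p.y) (b := p.x)
  have hk6 : cls6 M p → kcnt M p = 2 := fun h => h.1
  have hk78 : cls7 M p ∨ cls8 M p → kcnt M p = 3 := fun h => h.elim (·.1) (·.1)
  rw [P3.sum_verts]
  rcases cls_cases M p with ⟨h2, h3, h4, h5, h6, h7, h8⟩ | ⟨h2, h3, h4, h5, h6, h7, h8⟩ |
    ⟨h2, h3, h4, h5, h6, h7, h8⟩ | ⟨h2, h3, h4, h5, h6, h7, h8⟩ | ⟨h2, h3, h4, h5, h6, h7, h8⟩ |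
    ⟨h2, h3, h4, h5, h6, h7, h8⟩ | ⟨h2, h3, h4, h5, h6, h7, h8⟩ | ⟨h2, h3, h4, h5, h6, h7, h8⟩
  all_goals
    simp only [h2, h3, h4, h5, h6, h7, h8, pathValue, pathGain, charge, or_true,
      or_false, if_true, if_false, true_and, false_and, zero_mul, ite_self, add_zero,
      zero_add, mul_zero, true_implies, le_refl] at *
  · rw [← e2, gain_eq_weight (by simp [o24.1])]
    linarith
  · rw [← e34, gain_eq_weight (by simp [o3.2])]
    linarith
  · rw [← e34, gain_eq_weight (by simp [o24.1])]
    linarith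
  · rw [← e57, gain_eq_weight (by simp [o3.2])]
    linarith
  · have hk := hk6
    rw [kcnt_eq, if_pos o68.1] at hk
    simp only [hxy, hyz.symm, if_false, if_true, o68.1]
    unfold gain P3.wt
    simp only [mem_filter, mem_univ, true_and, o68.1, sw]
    have l1 := min_le_left (w s(p.y, m p.y)) (w s(p.x, m p.x))
    have l2 := min_le_right (w s(p.y, m p.y)) (w s(p.x, m p.x))
    have l3 := min_le_left (w s(p.y, m p.y)) (w s(p.z, m p.z))
    have l4 := min_le_right (w s(p.y, m p.y)) (w s(p.z, m p.z))
    by_cases cx : covered M p.x <;> by_cases cz : covered M p.z <;>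
      simp only [cx, cz, if_true, if_false] at hk ⊢ <;> first | omega | linarith
  · rw [← e57]
    have hk := hk78
    have hc := covered_of_kcnt_eq_three hk
    simp only [hc.1, hc.2.1, hc.2.2, if_true]
    have l1 := min_le_left (w s(p.y, m p.y)) (w s(outer w M p, m (outer w M p)))
    have l2 := min_le_right (w s(p.y, m p.y)) (w s(outer w M p, m (outer w M p)))
    have hy : w s(p.y, m p.y) = w s(p.x, m p.x) ∧ outer w M p = p.z ∨
        w s(p.y, m p.y) = w s(p.z, m p.z) ∧ outer w M p = p.x := by
      rcases o57.1 with h | h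
      · left
        refine ⟨?_, o1.resolve_left fun h' => o57.2.1 (h.trans h'.symm)⟩
        rw [← h, hinv, Sym2.eq_swap]
      · right
        refine ⟨?_, o1.resolve_right fun h' => o57.2.1 (h.trans h'.symm)⟩
        rw [← h, hinv, Sym2.eq_swap]
    unfold gain
    rw [if_pos (by simp [o7])]
    rcases hy with ⟨a, b⟩ | ⟨a, b⟩ <;> rw [b] at l1 l2 ⊢ <;> linarith
  · have hk := hk78
    have hc := covered_of_kcnt_eq_three hk
    simp only [hc.1, hc.2.1, hc.2.2, if_true]
    unfold gain P3.wt
    simp only [mem_filter, mem_univ, true_and, hc.1, hc.2.1, hc.2.2, sw, if_true]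
    have l1 := min_le_left (w s(p.y, m p.y)) (w s(p.x, m p.x))
    have l2 := min_le_right (w s(p.y, m p.y)) (w s(p.x, m p.x))
    have l3 := min_le_left (w s(p.y, m p.y)) (w s(p.z, m p.z))
    have l4 := min_le_right (w s(p.y, m p.y)) (w s(p.z, m p.z))
    linarith

/-- An edge of `M` meeting a middle edge of `p` contains the covered endpoint of that edge. -/
lemma exists_covered_of_shares {M : Finset (Sym2 V)} {p : P3 V} {f g : Sym2 V} (hf : f ∈ M)
    (hg : g ∈ p.edges) (hmid : isMiddle M g) (hs : shares f g) :
    ∃ r ∈ f, r ∈ p.verts ∧ r ∈ g ∧ ∃ t ∈ p.verts, g = s(r, t) ∧ ¬ covered M t := by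
  obtain ⟨u, v, rfl, hu, hv⟩ := hmid
  obtain ⟨r, hrf, hrg⟩ := hs
  have hr : r = u := by
    rcases Sym2.mem_iff.1 hrg with h | h
    · exact h
    · exact absurd ⟨f, hf, h ▸ hrf⟩ hv
  subst hr
  have hedge : ∀ a ∈ s(r, v), a ∈ p.verts := by
    intro a ha
    simp only [P3.edges, mem_insert, mem_singleton] at hg
    rw [P3.mem_verts]
    rcases hg with hg | hg <;> rw [hg, Sym2.mem_iff] at ha <;> tauto
  exact ⟨r, hrf, hedge r (by simp), by simp, v, hedge v (by simp), rfl, hv⟩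

lemma middle_edge_cls6 {M : Finset (Sym2 V)} {p : P3 V} (hp : cls6 M p) {r t : V}
    (hg : s(r, t) ∈ p.edges) (ht : ¬ covered M t) :
    r = p.y ∧ t = if covered M p.x then p.z else p.x := by
  obtain ⟨hk, hy, -⟩ := hp
  rw [kcnt_eq] at hk
  have h1 := p.hxy
  have h2 := p.hyz
  have h3 := p.hxz
  simp only [P3.edges, mem_insert, mem_singleton, Sym2.eq_iff] at hg
  grind

/-- The rate at which the weight of an edge `f` of `M` enters the lower bound. -/
noncomputable def edgeRate (P : Finset (P3 V)) (M : Finset (Sym2 V)) (f : Sym2 V) : ℝ :=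
  2 / 3 + (if f ∈ Mset1' P M then 1 / 12 else 0) + (if f ∈ Mset1'' P M then 1 / 6 else 0) +
    (if f ∈ Mset1''' P M then 1 / 4 else 0) + (if f ∈ Mset2 P M then 1 / 6 else 0) +
    (if f ∈ Mset4 P M then 1 / 3 else 0)

lemma mem_psel {P : Finset (P3 V)} {c : P3 V → Prop} {p : P3 V} :
    p ∈ psel P c ↔ p ∈ P ∧ c p := by
  unfold psel
  exact Finset.mem_filter

lemma mem_Mset1 {P : Finset (P3 V)} {M : Finset (Sym2 V)} {f : Sym2 V} :
    f ∈ Mset1 P M ↔ f ∈ M ∧ ∃ g, middleIn M (psel P (cls6 M)) g ∧ shares f g := by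
  unfold Mset1
  exact Finset.mem_filter

lemma mem_Mset2 {P : Finset (P3 V)} {M : Finset (Sym2 V)} {f : Sym2 V} :
    f ∈ Mset2 P M ↔ f ∈ M ∧ (∃ g, middleIn M P g ∧ shares f g) ∧
      ∀ g, middleIn M P g → shares f g → middleIn M (P234 P M) g := by
  unfold Mset2
  exact Finset.mem_filter

lemma mem_mid6 {P : Finset (P3 V)} {M : Finset (Sym2 V)} {g : Sym2 V} :
    g ∈ mid6 P M ↔ middleIn M (psel P (cls6 M)) g := by
  unfold mid6 middleIn Esub
  rw [Finset.mem_filter, Finset.mem_biUnion]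

lemma mem_Mset1' {P : Finset (P3 V)} {M : Finset (Sym2 V)} {f : Sym2 V} :
    f ∈ Mset1' P M ↔ f ∈ Mset1 P M ∧ ((mid6 P M).filter fun g => shares f g).card = 1 ∧
      ∀ g, middleIn M (P234 P M) g → ¬ shares f g := by
  unfold Mset1'
  exact Finset.mem_filter

lemma mem_Mset1'' {P : Finset (P3 V)} {M : Finset (Sym2 V)} {f : Sym2 V} :
    f ∈ Mset1'' P M ↔ f ∈ Mset1 P M ∧ ((mid6 P M).filter fun g => shares f g).card = 2 := by
  unfold Mset1''
  exact Finset.mem_filter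

lemma mem_Mset1''' {P : Finset (P3 V)} {M : Finset (Sym2 V)} {f : Sym2 V} :
    f ∈ Mset1''' P M ↔ f ∈ Mset1 P M ∧ ((mid6 P M).filter fun g => shares f g).card = 1 ∧
      ∃ g, middleIn M (P234 P M) g ∧ shares f g := by
  unfold Mset1'''
  exact Finset.mem_filter

set_option maxHeartbeats 1000000 in
lemma edgeRate_le {P : Finset (P3 V)} {M : Finset (Sym2 V)} {own : V → P3 V}
    (hown : ∀ p ∈ P, ∀ v, v ∈ p.verts → own v = p) {f : Sym2 V} (hf : f ∈ M)
    (hdiag : ¬ f.IsDiag) :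
    edgeRate P M f ≤ 1 - ∑ v ∈ f.toFinset, charge M (own v) v := by
  have mid : ∀ g ∈ mid6 P M, shares f g → ∃ r ∈ f, cls6 M (own r) ∧ r = (own r).y ∧
      g = s(r, if covered M (own r).x then (own r).z else (own r).x) := by
    intro g hg hs
    obtain ⟨⟨p, hp, hgp⟩, hmid⟩ := mem_mid6.1 hg
    obtain ⟨hp, h6⟩ := mem_psel.1 hp
    obtain ⟨r, hrf, hrp, -, t, -, rfl, ht⟩ := exists_covered_of_shares hf hgp hmid hs
    obtain ⟨h1, h2⟩ := middle_edge_cls6 h6 hgp ht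
    refine ⟨r, hrf, ?_⟩
    rw [hown p hp r hrp]
    exact ⟨h6, h1, by rw [← h2]⟩
  have m234 : ∀ g, middleIn M (P234 P M) g → shares f g →
      ∃ r ∈ f, r ∈ g ∧ (cls2 M (own r) ∨ cls3 M (own r) ∨ cls4 M (own r)) := by
    rintro g ⟨⟨p, hp, hgp⟩, hmid⟩ hs
    obtain ⟨hp, hc⟩ := mem_psel.1 hp
    obtain ⟨r, hrf, hrp, hrg, -⟩ := exists_covered_of_shares hf hgp hmid hs
    refine ⟨r, hrf, hrg, ?_⟩
    rwa [hown p hp r hrp]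
  have one : f ∈ Mset1 P M → ∃ g ∈ mid6 P M, shares f g := by
    intro h
    obtain ⟨-, g, hg, hs⟩ := mem_Mset1.1 h
    exact ⟨g, mem_mid6.2 hg, hs⟩
  have two : f ∈ Mset2 P M →
      (∃ r ∈ f, cls2 M (own r) ∨ cls3 M (own r) ∨ cls4 M (own r)) ∧ f ∉ Mset1 P M := by
    intro h
    obtain ⟨-, ⟨g, hg, hs⟩, hall⟩ := mem_Mset2.1 h
    obtain ⟨r, hr, -, hc⟩ := m234 g (hall g hg hs) hs
    refine ⟨⟨r, hr, hc⟩, fun h1 => ?_⟩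
    obtain ⟨g, hg, hs⟩ := one h1
    obtain ⟨⟨p, hp, hgp⟩, hgmid⟩ := mem_mid6.1 hg
    obtain ⟨t, htf, h6, -, hgt⟩ := mid g hg hs
    obtain ⟨⟨q, hq, hgq⟩, -⟩ := hall g ⟨⟨p, (mem_psel.1 hp).1, hgp⟩, hgmid⟩ hs
    obtain ⟨hq, hc⟩ := mem_psel.1 hq
    have htq : t ∈ q.verts := by
      simp only [P3.edges, mem_insert, mem_singleton] at hgq
      have : t ∈ g := by rw [hgt]; simp
      rw [P3.mem_verts]
      rcases hgq with h | h <;> rw [h, Sym2.mem_iff] at this <;> tauto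
    rw [hown q hq t htq] at h6
    exact (not_cls678 (Or.inl hc)).1 h6
  have four : f ∈ Mset4 P M → ∀ r ∈ f, cls5 M (own r) := by
    intro h r hr
    obtain ⟨-, h⟩ := Finset.mem_inter.1 h
    obtain ⟨p, hp, hfp⟩ := Finset.mem_biUnion.1 h
    obtain ⟨hp, h5⟩ := mem_psel.1 hp
    have hrp : r ∈ p.verts := by
      simp only [P3.edges, mem_insert, mem_singleton] at hfp
      rw [P3.mem_verts]
      rcases hfp with h | h <;> rw [h, Sym2.mem_iff] at hr <;> tauto
    rwa [hown p hp r hrp]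
  have hthree : f ∈ Mset1''' P M → ∃ r ∈ f, cls2 M (own r) ∨ cls3 M (own r) ∨ cls4 M (own r) := by
    intro h
    obtain ⟨-, -, g, hg, hs⟩ := mem_Mset1'''.1 h
    obtain ⟨r, hr, -, hc⟩ := m234 g hg hs
    exact ⟨r, hr, hc⟩
  have hmidc : f ∈ Mset1 P M → ∃ r ∈ f, cls6 M (own r) ∧ r = (own r).y := by
    intro h
    obtain ⟨g, hg, hs⟩ := one h
    obtain ⟨r, hr, h6, hy, -⟩ := mid g hg hs
    exact ⟨r, hr, h6, hy⟩
  have hboth : ((mid6 P M).filter fun g => shares f g).card = 2 →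
      ∀ r ∈ f, cls6 M (own r) ∧ r = (own r).y := by
    intro hcard r hr
    by_contra hcon
    obtain ⟨t, rfl⟩ := Sym2.mem_iff_exists.1 hr
    have hsub : ((mid6 P M).filter fun g => shares s(r, t) g) ⊆
        {s(t, if covered M (own t).x then (own t).z else (own t).x)} := by
      intro g hg
      obtain ⟨hg, hs⟩ := Finset.mem_filter.1 hg
      obtain ⟨a, ha, h6, hy, hga⟩ := mid g hg hs
      rw [Sym2.mem_iff] at ha
      rcases ha with rfl | rfl
      · exact absurd ⟨h6, hy⟩ hcon
      · exact Finset.mem_singleton.2 hga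
    have := Finset.card_le_card hsub
    rw [hcard, Finset.card_singleton] at this
    omega
  have s1 : f ∈ Mset1' P M → f ∈ Mset1 P M ∧ f ∉ Mset1'' P M ∧ f ∉ Mset1''' P M := by
    rw [mem_Mset1', mem_Mset1'', mem_Mset1''']
    rintro ⟨h1, h2, h3⟩
    refine ⟨h1, fun h => ?_, fun ⟨_, _, g, hg, hs⟩ => h3 g hg hs⟩
    omega
  have s2 : f ∈ Mset1'' P M → f ∈ Mset1 P M ∧ f ∉ Mset1''' P M ∧
      ((mid6 P M).filter fun g => shares f g).card = 2 := by
    rw [mem_Mset1'', mem_Mset1''']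
    rintro ⟨h1, h2⟩
    refine ⟨h1, fun h => ?_, h2⟩
    omega
  have s3 : f ∈ Mset1''' P M → f ∈ Mset1 P M := fun h => (mem_Mset1'''.1 h).1
  clear mid m234 one
  induction f using Sym2.inductionOn with
  | _ u v =>
  have huv : u ≠ v := by simpa using hdiag
  have hsum : ∑ r ∈ s(u, v).toFinset, charge M (own r) r =
      charge M (own u) u + charge M (own v) v := by
    rw [Sym2.toFinset_mk_eq, Finset.sum_pair huv]
  rw [hsum]
  simp only [Sym2.mem_iff, exists_eq_or_imp, exists_eq_left, forall_eq_or_imp, forall_eq] at *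
  have lu := charge_le M (own u) u
  have lv := charge_le M (own v) v
  have zu := fun h => charge_eq_zero (M := M) (p := own u) h u
  have zv := fun h => charge_eq_zero (M := M) (p := own v) h v
  have mu : cls6 M (own u) ∧ u = (own u).y → charge M (own u) u = 1 / 12 := by
    rintro ⟨h, hy⟩
    rw [← charge_middle h, ← hy]
  have mv : cls6 M (own v) ∧ v = (own v).y → charge M (own v) v = 1 / 12 := by
    rintro ⟨h, hy⟩
    rw [← charge_middle h, ← hy]
  have xu := fun h => (not_cls678 (M := M) (p := own u) h).1
  have xv := fun h => (not_cls678 (M := M) (p := own v) h).1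
  have yu := fun h => not_cls5 (M := M) (p := own u) h
  have yv := fun h => not_cls5 (M := M) (p := own v) h
  generalize charge M (own u) u = a at *
  generalize charge M (own v) v = b at *
  unfold edgeRate
  by_cases k4 : s(u, v) ∈ Mset4 P M
  · obtain ⟨f1, f2⟩ := four k4
    have n1 : s(u, v) ∉ Mset1 P M := fun h => by
      rcases hmidc h with h | h
      · exact xu (Or.inr f1) h.1
      · exact xv (Or.inr f2) h.1
    have n2 : s(u, v) ∉ Mset2 P M := fun h => by
      rcases (two h).1 with h | h
      · exact yu h f1
      · exact yv h f2
    have a0 := zu (Or.inr f1)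
    have b0 := zv (Or.inr f2)
    rw [if_neg fun h => n1 (s1 h).1, if_neg fun h => n1 (s2 h).1, if_neg fun h => n1 (s3 h),
      if_neg n2, if_pos k4, a0, b0]
    norm_num
  rw [if_neg k4]
  by_cases k2 : s(u, v) ∈ Mset2 P M
  · obtain ⟨hc, n1⟩ := two k2
    rw [if_neg fun h => n1 (s1 h).1, if_neg fun h => n1 (s2 h).1, if_neg fun h => n1 (s3 h),
      if_pos k2]
    rcases hc with h | h
    · have := zu (Or.inl h)
      linarith
    · have := zv (Or.inl h)
      linarith
  rw [if_neg k2]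
  by_cases k3 : s(u, v) ∈ Mset1''' P M
  · have hmm := hmidc (s3 k3)
    rw [if_neg fun h => (s1 h).2.2 k3, if_neg fun h => (s2 h).2.1 k3, if_pos k3]
    rcases hthree k3 with h | h
    · have := zu (Or.inl h)
      have := mv (hmm.resolve_left fun hh => xu (Or.inl h) hh.1)
      linarith
    · have := zv (Or.inl h)
      have := mu (hmm.resolve_right fun hh => xv (Or.inl h) hh.1)
      linarith
  rw [if_neg k3]
  by_cases k1 : s(u, v) ∈ Mset1'' P M
  · obtain ⟨f1, f2⟩ := hboth (s2 k1).2.2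
    have := mu f1
    have := mv f2
    rw [if_neg fun h => (s1 h).2.1 k1, if_pos k1]
    linarith
  rw [if_neg k1]
  by_cases k0 : s(u, v) ∈ Mset1' P M
  · rw [if_pos k0]
    rcases hmidc (s1 k0).1 with h | h
    · have := mu h
      linarith
    · have := mv h
      linarith
  rw [if_neg k0]
  linarith

/-- The classes of 3-paths all of whose selected edges carry a constraint. -/
def linked (M : Finset (Sym2 V)) (p : P3 V) : Prop :=
  (cls6 M p ∨ cls8 M p) ∨ cls2 M p ∨ cls3 M p ∨ cls4 M p ∨ cls7 M p

/-- The indices whose selected edge is used for the value `b` of the labelling `γ`. -/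
noncomputable def active {ι : Type*} [Fintype ι] (M : Finset (Sym2 V)) (path : ι → P3 V)
    (γ : V → Bool) (b : Bool) : Finset ι :=
  univ.filter fun i => cls5 M (path i) ∨ (linked M (path i) ∧ γ (path i).y = b)

section Packing

variable {ι : Type*} [Fintype ι] {w : Sym2 V → ℝ} {M : Finset (Sym2 V)} {m : V → V}
  {path : ι → P3 V} {own : V → ι}

lemma contractedMatching_active (hinv : ∀ v, m (m v) = v) (hcov : ∀ v, covered M v ↔ m v ≠ v)
    (hm : ∀ u v, s(u, v) ∈ M ↔ u ≠ v ∧ m u = v)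
    (hown : ∀ i, ∀ v ∈ (path i).verts, own v = i) {γ : V → Bool} {δ : ι → V}
    (hγ : ∀ v, covered M v → γ (m v) = !γ v)
    (hδ : ∀ i, linked M (path i) ∨ cls5 M (path i) → (δ i = (path i).x ∨ δ i = (path i).z) ∧
      m (path i).y ≠ δ i ∧ (covered M (path i).y ∨ covered M (δ i)))
    (h5 : ∀ i, cls5 M (path i) → δ i = outer w M (path i))
    (hpair : ∀ i, linked M (path i) → γ (path i).y = γ (δ i)) (b : Bool) :
    ContractedMatching m (univ.filter (covered M)) (univ.filter fun v => ¬ covered M v)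
      (active M path γ b) (fun i => if covered M (path i).y then (path i).y else δ i)
      (fun i => if covered M (path i).y then δ i else (path i).y) := by
  have hmem : ∀ i ∈ active M path γ b,
      cls5 M (path i) ∨ (linked M (path i) ∧ γ (path i).y = b) := fun i hi =>
    (Finset.mem_filter.1 hi).2
  have hact : ∀ i ∈ active M path γ b, linked M (path i) ∨ cls5 M (path i) := fun i hi =>
    (hmem i hi).elim Or.inr fun h => Or.inl h.1
  have hends : ∀ i u, (u = (if covered M (path i).y then (path i).y else δ i) ∨
      u = if covered M (path i).y then δ i else (path i).y) → u = (path i).y ∨ u = δ i := by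
    intro i u h
    split_ifs at h <;> tauto
  have hverts : ∀ i ∈ active M path γ b, ∀ u, u = (path i).y ∨ u = δ i → u ∈ (path i).verts := by
    intro i hi u hu
    have := (hδ i (hact i hi)).1
    rw [P3.mem_verts]
    rcases hu with rfl | rfl <;> tauto
  have hmate : ∀ i ∈ active M path γ b, cls5 M (path i) → ∀ u, u = (path i).y ∨ u = δ i →
      m u ∈ (path i).verts := by
    intro i hi hc u hu
    obtain ⟨-, -, o3, -, o57, -⟩ := outer_spec w hinv hcov hm (path i)
    rcases hu with rfl | rfl
    · rw [P3.mem_verts]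
      have := (o57 (Or.inl hc)).1
      tauto
    · have : m (δ i) = δ i := by
        rw [h5 i hc]
        exact not_not.1 fun h => (o3 (Or.inr hc)).2 ((hcov _).2 h)
      rw [this]
      exact hverts i hi _ (Or.inr rfl)
  refine ⟨fun i hi => ?_, fun i hi => ?_, fun i hi => ?_, fun i hi j hj hij u v hu hv => ?_⟩
  · have := (hδ i (hact i hi)).2.2
    rw [Finset.mem_filter]
    refine ⟨mem_univ _, ?_⟩
    split_ifs <;> tauto
  · simp only [Finset.mem_filter, mem_univ, true_and]
    exact em _
  · obtain ⟨h1, h2, -⟩ := hδ i (hact i hi)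
    have hne : δ i ≠ (path i).y := by
      rcases h1 with h | h <;> rw [h]
      exacts [(path i).hxy, (path i).hyz.symm]
    split_ifs
    · exact ⟨hne.symm, h2.symm⟩
    · exact ⟨hne, fun h => h2 (by rw [h, hinv])⟩
  · have hu' := hends i u hu
    have hv' := hends j v hv
    have hou := hown i u (hverts i hi u hu')
    have hov := hown j v (hverts j hj v hv')
    refine ⟨fun h => hij (by rw [← hou, ← hov, h]), fun h => ?_⟩
    rcases hmem i hi with c | ⟨ci, bi⟩
    · have := hown i _ (hmate i hi c u hu')
      rw [h, hinv, hov] at this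
      exact hij this.symm
    rcases hmem j hj with c | ⟨cj, bj⟩
    · have := hown j _ (hmate j hj c v hv')
      rw [← h, hou] at this
      exact hij this
    have gu : γ u = b := by
      rcases hu' with rfl | rfl
      · exact bi
      · rw [← hpair i ci, bi]
    have gv : γ v = b := by
      rcases hv' with rfl | rfl
      · exact bj
      · rw [← hpair j cj, bj]
    by_cases hc : covered M v
    · have := hγ v hc
      rw [← h, gu, gv] at this
      simp at this
    · rw [hcov, not_not] at hc
      rw [hc] at h
      exact hij (by rw [← hou, ← hov, h])

lemma exists_packing_of_labelling (hw : ∀ e, 0 ≤ w e) (hM : IsMatching M)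
    (hcard : 3 * M.card = Fintype.card V)
    (hinv : ∀ v, m (m v) = v) (hcov : ∀ v, covered M v ↔ m v ≠ v)
    (hm : ∀ u v, s(u, v) ∈ M ↔ u ≠ v ∧ m u = v)
    (hown : ∀ i, ∀ v ∈ (path i).verts, own v = i) {γ : V → Bool} {δ : ι → V}
    (hγ : ∀ v, covered M v → γ (m v) = !γ v)
    (hδ : ∀ i, linked M (path i) ∨ cls5 M (path i) → (δ i = (path i).x ∨ δ i = (path i).z) ∧
      m (path i).y ≠ δ i ∧ (covered M (path i).y ∨ covered M (δ i)))
    (h5 : ∀ i, cls5 M (path i) → δ i = outer w M (path i))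
    (hpair : ∀ i, linked M (path i) → γ (path i).y = γ (δ i)) (b : Bool) :
    ∃ P, IsPacking P ∧ ew w M + ∑ i ∈ active M path γ b,
      gain w m (univ.filter (covered M)) (path i).y (δ i) ≤ pw w P := by
  have hC : (univ.filter (covered M)).card = 2 * M.card := hM.card_covered
  have hsum := Finset.card_filter_add_card_filter_not (s := (univ : Finset V)) (covered M)
  rw [Finset.card_univ] at hsum
  have hu : (univ.filter (covered M)) ∪ (univ.filter fun v => ¬ covered M v) = univ := by
    ext v
    simp [em]
  obtain ⟨P, hP, hle⟩ := exists_packs_of_contractedMatching hw hinv _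
    (univ.filter (covered M)) (univ.filter fun v => ¬ covered M v) (active M path γ b) rfl
    (fun v hv => by
      simp only [Finset.mem_filter, mem_univ, true_and] at hv ⊢
      refine ⟨?_, (hcov v).1 hv⟩
      rw [hcov, hinv]
      exact ((hcov v).1 hv).symm)
    (fun v hv => by simpa using hv) (by omega)
    (contractedMatching_active (w := w) hinv hcov hm hown hγ hδ h5 hpair b)
  rw [hu] at hP
  refine ⟨P, hP.isPacking, le_trans (le_of_eq ?_) hle⟩
  congr 1
  · have := hM.sum_covered hm w fun _ => 1
    simp only [one_mul] at this
    rw [this, Finset.mul_sum]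
    refine Finset.sum_congr rfl fun f hf => ?_
    rw [Finset.sum_const, Sym2.card_toFinset_of_not_isDiag f (hM.1 f hf)]
    norm_num
    ring
  · refine Finset.sum_congr rfl fun i _ => ?_
    split_ifs
    · rfl
    · exact gain_comm _ _ _ _ _

end Packing

section Labelling

variable {ι : Type*} [Fintype ι] {M : Finset (Sym2 V)} {m : V → V}
  {path : ι → P3 V} {own : V → ι}

/-- The involution on `V × Bool` extending a matching involution on the covered vertices and
swapping the two copies of every other vertex. -/
noncomputable def doubledMate (m : V → V) (v : V × Bool) : V × Bool :=
  if m v.1 ≠ v.1 then (m v.1, v.2) else (v.1, !v.2)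

lemma doubledMate_mate (hinv : ∀ v, m (m v) = v) (v : V × Bool) :
    doubledMate m (doubledMate m v) = v := by
  unfold doubledMate
  by_cases h : m v.1 = v.1
  · simp [h]
  · have : v.1 ≠ m v.1 := fun h' => h h'.symm
    simp [h, hinv, this]

lemma doubledMate_ne (v : V × Bool) : doubledMate m v ≠ v := by
  unfold doubledMate
  intro h
  by_cases hv : m v.1 = v.1
  · rw [if_neg (not_not.2 hv)] at h
    simpa using congrArg Prod.snd h
  · rw [if_pos hv] at h
    exact hv (congrArg Prod.fst h)

lemma doubledMate_of_fixed {v : V} (h : m v = v) (b : Bool) :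
    doubledMate m (v, b) = (v, !b) := by
  simp [doubledMate, h]

lemma doubledMate_of_moved {v : V} (h : m v ≠ v) (b : Bool) :
    doubledMate m (v, b) = (m v, b) := by
  simp [doubledMate, h]

lemma doubledMate_ne_of_ne {u v : V} (h : m u ≠ v) (huv : u ≠ v) (b c : Bool) :
    doubledMate m (u, b) ≠ (v, c) := by
  unfold doubledMate
  intro h'
  split_ifs at h'
  · exact h (congrArg Prod.fst h')
  · exact huv (congrArg Prod.fst h')

lemma outer_ne_mate (w : Sym2 V → ℝ) (hinv : ∀ v, m (m v) = v)
    (hcov : ∀ v, covered M v ↔ m v ≠ v) (hm : ∀ u v, s(u, v) ∈ M ↔ u ≠ v ∧ m u = v) {p : P3 V}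
    (hp : (cls2 M p ∨ cls3 M p ∨ cls4 M p ∨ cls7 M p) ∨ cls5 M p) :
    m p.y ≠ outer w M p ∧ m (outer w M p) ≠ p.y := by
  obtain ⟨ho, o24, o3, -, o57, -⟩ := outer_spec w hinv hcov hm p
  have hne : outer w M p ≠ p.y := by
    rcases ho with h | h <;> rw [h]
    exacts [p.hxy, p.hyz.symm]
  have h24 : cls2 M p ∨ cls4 M p → m p.y ≠ outer w M p ∧ m (outer w M p) ≠ p.y := by
    intro h
    have hy : m p.y = p.y := not_not.1 fun h' => (o24 h).1 ((hcov _).2 h')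
    rw [hy]
    exact ⟨hne.symm, fun h' => hne (by rw [← hinv (outer w M p), h', hy])⟩
  have h3 : cls3 M p → m p.y ≠ outer w M p ∧ m (outer w M p) ≠ p.y := by
    intro h
    have ho : m (outer w M p) = outer w M p :=
      not_not.1 fun h' => (o3 (Or.inl h)).2 ((hcov _).2 h')
    rw [ho]
    exact ⟨fun h' => hne (by rw [← hinv p.y, h', ho]), hne⟩
  rcases hp with (h | h | h | h) | h
  exacts [h24 (Or.inl h), h3 h, h24 (Or.inr h), (o57 (Or.inr h)).2, (o57 (Or.inl h)).2]

/-- Two choices of one edge per 3-path, each with a labelling alternating along the matching and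
constant on the chosen edges, such that classes 6 and 8 use their two edges once each. -/
lemma exists_labellings (w : Sym2 V → ℝ) (hinv : ∀ v, m (m v) = v)
    (hcov : ∀ v, covered M v ↔ m v ≠ v) (hm : ∀ u v, s(u, v) ∈ M ↔ u ≠ v ∧ m u = v)
    (hown : ∀ i, ∀ v ∈ (path i).verts, own v = i) :
    ∃ (δ₁ δ₂ : ι → V) (γ₁ γ₂ : V → Bool),
      (∀ i, cls6 M (path i) ∨ cls8 M (path i) →
        δ₁ i = (path i).x ∧ δ₂ i = (path i).z ∨ δ₁ i = (path i).z ∧ δ₂ i = (path i).x) ∧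
      (∀ i, ¬ (cls6 M (path i) ∨ cls8 M (path i)) →
        δ₁ i = outer w M (path i) ∧ δ₂ i = outer w M (path i)) ∧
      (∀ v, covered M v → γ₁ (m v) = !γ₁ v) ∧ (∀ v, covered M v → γ₂ (m v) = !γ₂ v) ∧
      (∀ i, linked M (path i) → γ₁ (path i).y = γ₁ (δ₁ i)) ∧
      ∀ i, linked M (path i) → γ₂ (path i).y = γ₂ (δ₂ i) := by
  have spec := fun i => outer_spec w hinv hcov hm (path i)
  have hoy : ∀ i, outer w M (path i) ≠ (path i).y := fun i => by
    rcases (spec i).1 with h | h <;> rw [h]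
    exacts [(path i).hxy, (path i).hyz.symm]
  have ox : ∀ i, own (path i).x = i := fun i => hown i _ (by simp [P3.mem_verts])
  have oy : ∀ i, own (path i).y = i := fun i => hown i _ (by simp [P3.mem_verts])
  have oz : ∀ i, own (path i).z = i := fun i => hown i _ (by simp [P3.mem_verts])
  have oo : ∀ i, own (outer w M (path i)) = i := fun i => by
    rcases (spec i).1 with h | h <;> rw [h]
    exacts [ox i, oz i]
  let X : ι → V × Bool := fun i => ((path i).x, true)
  let Y : ι → V × Bool := fun i => ((path i).y, true)
  let Z : ι → V × Bool := fun i => ((path i).z, true)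
  let E : ι → V × Bool := fun i => (outer w M (path i), true)
  let T : Finset ι := univ.filter fun i => cls6 M (path i) ∨ cls8 M (path i)
  let D : Finset ι := univ.filter fun i =>
    cls2 M (path i) ∨ cls3 M (path i) ∨ cls4 M (path i) ∨ cls7 M (path i)
  have hT : ∀ i, i ∈ T ↔ cls6 M (path i) ∨ cls8 M (path i) := fun i => by simp [T]
  have hD : ∀ i, i ∈ D ↔
      cls2 M (path i) ∨ cls3 M (path i) ∨ cls4 M (path i) ∨ cls7 M (path i) := fun i => by simp [D]
  obtain ⟨g₀, hg₀⟩ := exists_alternating (doubledMate_mate hinv) (doubledMate_ne (m := m))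
  obtain ⟨d₁, d₂, g₁, g₂, c₁, c₂, b₁, b₂, hd⟩ := splitBalanced_of_disjoint (x := X) (y := Y) (z := Z)
    (own := fun v => own v.1) (doubledMate_mate hinv) (doubledMate_ne (m := m)) ox oy oz
    (fun i => by simp [X, Y, Z, (path i).hxy, (path i).hyz, (path i).hxz]) T
    (fun i hi => by
      obtain ⟨-, h1, h2, -, -⟩ := (spec i).2.2.2.2.2 ((hT i).1 hi)
      exact ⟨doubledMate_ne_of_ne h1 (path i).hxy.symm _ _,
        doubledMate_ne_of_ne h2 (path i).hyz _ _⟩) g₀ hg₀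
  have hSD : ∀ i ∈ D, i ∉ T := by
    intro i hi hi'
    rw [hD] at hi
    rw [hT] at hi'
    have := cls_cases M (path i)
    tauto
  have he : ∀ i ∈ D, own (E i).1 = i ∧ E i ≠ Y i ∧ doubledMate m (Y i) ≠ E i ∧
      doubledMate m (E i) ≠ Y i := by
    intro i hi
    have key := outer_ne_mate w hinv hcov hm (p := path i) (Or.inl ((hD i).1 hi))
    exact ⟨oo i, fun h => hoy i (congrArg Prod.fst h),
      doubledMate_ne_of_ne key.1 (hoy i).symm _ _, doubledMate_ne_of_ne key.2 (hoy i) _ _⟩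
  have hfree : ∀ d : ι → V × Bool, (∀ i ∈ T, d i = X i ∨ d i = Z i) → ∀ i ∈ D,
      (∀ q, doubledMate m (Y i) ≠ Y q ∧ (q ∈ T → doubledMate m (Y i) ≠ d q) ∧
        (q ∈ D → doubledMate m (Y i) ≠ E q)) ∨
      (∀ q, doubledMate m (E i) ≠ Y q ∧ (q ∈ T → doubledMate m (E i) ≠ d q) ∧
        (q ∈ D → doubledMate m (E i) ≠ E q)) := by
    intro d hd i hi
    have hsnd : ∀ v : V × Bool, v.2 = false →
        ∀ q, v ≠ Y q ∧ (q ∈ T → v ≠ d q) ∧ (q ∈ D → v ≠ E q) := by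
      intro v hv q
      refine ⟨?_, fun hq => ?_, fun hq => ?_⟩
      · rintro rfl
        cases hv
      · rintro rfl
        rcases hd q hq with h | h <;> rw [h] at hv <;> cases hv
      · rintro rfl
        cases hv
    obtain ⟨-, o24, o3, o7, o57, -⟩ := spec i
    have huncov : ∀ v, ¬ covered M v → (doubledMate m (v, true)).2 = false := by
      intro v hv
      rw [hcov, not_not] at hv
      rw [doubledMate_of_fixed hv]
      rfl
    rcases (hD i).1 hi with h | h | h | h
    · exact Or.inl (hsnd _ (huncov _ (o24 (Or.inl h)).1))
    · exact Or.inr (hsnd _ (huncov _ (o3 (Or.inl h)).2))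
    · exact Or.inl (hsnd _ (huncov _ (o24 (Or.inr h)).1))
    · left
      obtain ⟨h1, h2, -⟩ := o57 (Or.inr h)
      have hmy := (hcov _).1 (o7 h).1
      have hY : doubledMate m (Y i) = (m (path i).y, true) := doubledMate_of_moved hmy true
      have hoi : own (m (path i).y) = i := by
        rcases h1 with h | h <;> rw [h]
        exacts [ox i, oz i]
      intro q
      rw [hY]
      refine ⟨fun h' => ?_, fun hq h' => ?_, fun hq h' => ?_⟩
      · have h' : m (path i).y = (path q).y := congrArg Prod.fst h'
        have hiq : i = q := by rw [← hoi, h', oy]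
        subst hiq
        exact hmy h'
      · have hiq : i = q := by
          rcases hd q hq with h | h <;> rw [h] at h' <;> have h' := congrArg Prod.fst h' <;>
            simp only [X, Z] at h' <;> rw [← hoi, h']
          exacts [ox q, oz q]
        subst hiq
        exact hSD _ hi hq
      · have h' : m (path i).y = outer w M (path q) := congrArg Prod.fst h'
        have hiq : i = q := by rw [← hoi, h', oo]
        subst hiq
        exact h2 h'
  have hd1 : ∀ i ∈ T, d₁ i = X i ∨ d₁ i = Z i := fun i hi => by
    have := hd i hi
    tauto
  have hd2 : ∀ i ∈ T, d₂ i = X i ∨ d₂ i = Z i := fun i hi => by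
    have := hd i hi
    tauto
  have finish : ∀ (d : ι → V × Bool) (g : V × Bool → Bool) (c : V × Bool → V × Bool),
      (∀ i ∈ T, d i = X i ∨ d i = Z i) → Balanced (doubledMate m) Y T d g c →
      ∃ γ : V → Bool, (∀ v, covered M v → γ (m v) = !γ v) ∧ ∀ i, linked M (path i) →
        γ (path i).y = γ (if cls6 M (path i) ∨ cls8 M (path i) then (d i).1
          else outer w M (path i)) := by
    intro d g c hd hb
    obtain ⟨g', h1, h2, h3⟩ := hb.exists_union (own := fun v => own v.1) (e := E)
      (doubledMate_ne (m := m)) oy hSD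
      (fun i hi => by
        rcases hd i hi with h | h <;> rw [h]
        exacts [ox i, oz i]) he (hfree d hd)
    refine ⟨fun v => g' (v, true), fun v hv => ?_, fun i hi => ?_⟩
    · rw [← h1, doubledMate_of_moved ((hcov v).1 hv)]
    · by_cases hc : cls6 M (path i) ∨ cls8 M (path i)
      · have hdi : d i = ((d i).1, true) := by
          rcases hd i ((hT i).2 hc) with h | h <;> rw [h]
        rw [if_pos hc]
        exact (h2 i ((hT i).2 hc)).trans (congrArg g' hdi)
      · rw [if_neg hc]
        exact h3 i ((hD i).2 (hi.resolve_left hc))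
  obtain ⟨γ₁, p1, q1⟩ := finish d₁ g₁ c₁ hd1 b₁
  obtain ⟨γ₂, p2, q2⟩ := finish d₂ g₂ c₂ hd2 b₂
  refine ⟨_, _, γ₁, γ₂, fun i hi => ?_, fun i hi => ?_, p1, p2, q1, q2⟩
  · simp only [if_pos hi]
    rcases hd i ((hT i).2 hi) with ⟨h1, h2⟩ | ⟨h1, h2⟩ <;> rw [h1, h2]
    exacts [Or.inl ⟨rfl, rfl⟩, Or.inr ⟨rfl, rfl⟩]
  · simp only [if_neg hi, and_self]

end Labelling

section Average

variable {ι : Type*} [Fintype ι] {w : Sym2 V → ℝ} {M : Finset (Sym2 V)} {m : V → V}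
  {path : ι → P3 V} {own : V → ι}

lemma sum_active (γ : V → Bool) (f : ι → ℝ) :
    ∑ i ∈ active M path γ true, f i + ∑ i ∈ active M path γ false, f i =
      ∑ i, if cls5 M (path i) then 2 * f i else if linked M (path i) then f i else 0 := by
  unfold active
  rw [Finset.sum_filter, Finset.sum_filter, ← Finset.sum_add_distrib]
  refine Finset.sum_congr rfl fun i _ => ?_
  by_cases h5 : cls5 M (path i)
  · simp only [h5, true_or, if_true]
    ring
  · by_cases hl : linked M (path i)
    · cases hb : γ (path i).y <;> simp [h5, hl]
    · simp [h5, hl]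

lemma exists_packing_pathGain (hw : ∀ e, 0 ≤ w e) (hM : IsMatching M)
    (hcard : 3 * M.card = Fintype.card V)
    (hinv : ∀ v, m (m v) = v) (hcov : ∀ v, covered M v ↔ m v ≠ v)
    (hm : ∀ u v, s(u, v) ∈ M ↔ u ≠ v ∧ m u = v)
    (hown : ∀ i, ∀ v ∈ (path i).verts, own v = i) :
    ∃ P, IsPacking P ∧ ew w M + 1 / 4 * ∑ i, pathGain w M m (path i) ≤ pw w P := by
  obtain ⟨δ₁, δ₂, γ₁, γ₂, hT, hO, hγ₁, hγ₂, p₁, p₂⟩ :=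
    exists_labellings w hinv hcov hm hown
  have edge : ∀ δ : ι → V, (∀ i, cls6 M (path i) ∨ cls8 M (path i) →
      δ i = (path i).x ∨ δ i = (path i).z) → (∀ i, ¬ (cls6 M (path i) ∨ cls8 M (path i)) →
      δ i = outer w M (path i)) → ∀ i, linked M (path i) ∨ cls5 M (path i) →
      (δ i = (path i).x ∨ δ i = (path i).z) ∧ m (path i).y ≠ δ i ∧
        (covered M (path i).y ∨ covered M (δ i)) := by
    intro δ h1 h2 i hi
    obtain ⟨ho, o24, o3, o7, -, o68⟩ := outer_spec w hinv hcov hm (path i)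
    by_cases hc : cls6 M (path i) ∨ cls8 M (path i)
    · obtain ⟨h3, h4, h5, -⟩ := o68 hc
      refine ⟨h1 i hc, ?_, Or.inl h3⟩
      rcases h1 i hc with h | h <;> rw [h] <;> assumption
    · have hi' : (cls2 M (path i) ∨ cls3 M (path i) ∨ cls4 M (path i) ∨ cls7 M (path i)) ∨
          cls5 M (path i) := hi.imp_left fun h => h.resolve_left hc
      rw [h2 i hc]
      refine ⟨ho, (outer_ne_mate w hinv hcov hm hi').1, ?_⟩
      rcases hi' with (h | h | h | h) | h
      exacts [Or.inr (o24 (Or.inl h)).2, Or.inl (o3 (Or.inl h)).1, Or.inr (o24 (Or.inr h)).2,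
        Or.inl (o7 h).1, Or.inl (o3 (Or.inr h)).1]
  have n5 : ∀ i, cls5 M (path i) → ¬ (cls6 M (path i) ∨ cls8 M (path i)) := fun i h => by
    have := not_cls678 (M := M) (p := path i) (Or.inr h)
    tauto
  have e₁ := edge δ₁ (fun i h => by have := hT i h; tauto) fun i h => (hO i h).1
  have e₂ := edge δ₂ (fun i h => by have := hT i h; tauto) fun i h => (hO i h).2
  have pack₁ := exists_packing_of_labelling hw hM hcard hinv hcov hm hown hγ₁ e₁
    (fun i h => (hO i (n5 i h)).1) p₁
  have pack₂ := exists_packing_of_labelling hw hM hcard hinv hcov hm hown hγ₂ e₂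
    (fun i h => (hO i (n5 i h)).2) p₂
  obtain ⟨P₁, hP₁, l₁⟩ := pack₁ true
  obtain ⟨P₂, hP₂, l₂⟩ := pack₁ false
  obtain ⟨P₃, hP₃, l₃⟩ := pack₂ true
  obtain ⟨P₄, hP₄, l₄⟩ := pack₂ false
  have s₁ := sum_active (M := M) (path := path) γ₁
    fun i => gain w m (univ.filter (covered M)) (path i).y (δ₁ i)
  have s₂ := sum_active (M := M) (path := path) γ₂
    fun i => gain w m (univ.filter (covered M)) (path i).y (δ₂ i)
  have hsum : ∑ i, pathGain w M m (path i) =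
      (∑ i, if cls5 M (path i) then
          2 * gain w m (univ.filter (covered M)) (path i).y (δ₁ i)
        else if linked M (path i) then gain w m (univ.filter (covered M)) (path i).y (δ₁ i)
        else 0) +
      ∑ i, if cls5 M (path i) then
          2 * gain w m (univ.filter (covered M)) (path i).y (δ₂ i)
        else if linked M (path i) then gain w m (univ.filter (covered M)) (path i).y (δ₂ i)
        else 0 := by
    rw [← Finset.sum_add_distrib]
    refine Finset.sum_congr rfl fun i _ => ?_
    unfold pathGain
    by_cases h5 : cls5 M (path i)
    · simp only [if_pos h5, (hO i (n5 i h5)).1, (hO i (n5 i h5)).2]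
      ring
    simp only [if_neg h5]
    by_cases hc : cls6 M (path i) ∨ cls8 M (path i)
    · have hn : ¬ (cls2 M (path i) ∨ cls3 M (path i) ∨ cls4 M (path i) ∨ cls7 M (path i)) := by
        have := cls_cases M (path i)
        tauto
      have hl : linked M (path i) := Or.inl hc
      simp only [if_neg hn, if_pos hc, if_pos hl]
      rcases hT i hc with ⟨h1, h2⟩ | ⟨h1, h2⟩ <;> rw [h1, h2]
      exact add_comm _ _
    · simp only [linked, hc, false_or, if_false, (hO i hc).1, (hO i hc).2]
      split_ifs <;> ring
  by_contra! hcon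
  have c₁ := hcon P₁ hP₁
  have c₂ := hcon P₂ hP₂
  have c₃ := hcon P₃ hP₃
  have c₄ := hcon P₄ hP₄
  linarith

end Average

lemma ew_mono {w : Sym2 V → ℝ} (hw : ∀ e, 0 ≤ w e) {F F' : Finset (Sym2 V)} (h : F ⊆ F') :
    ew w F ≤ ew w F' :=
  Finset.sum_le_sum_of_subset_of_nonneg h fun e _ _ => hw e

lemma ew_image_le {w : Sym2 V → ℝ} (hw : ∀ e, 0 ≤ w e) (S : Finset (P3 V))
    (f : P3 V → Sym2 V) : ew w (S.image f) ≤ ∑ p ∈ S, w (f p) :=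
  Finset.sum_image_le_of_nonneg fun e _ => hw e

lemma ew_Esub_le {w : Sym2 V → ℝ} (hw : ∀ e, 0 ≤ w e) (S : Finset (P3 V)) :
    ew w (Esub S) ≤ ∑ p ∈ S, p.wt w := by
  have hunion : ∀ F F' : Finset (Sym2 V), ew w (F ∪ F') ≤ ew w F + ew w F' := by
    intro F F'
    unfold ew
    rw [← Finset.sum_union_inter]
    exact le_add_of_nonneg_right (Finset.sum_nonneg fun e _ => hw e)
  unfold Esub
  induction S using Finset.induction_on with
  | empty => simp [ew]
  | insert p S hp ih =>
    rw [Finset.biUnion_insert, Finset.sum_insert hp]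
    refine (hunion _ _).trans (add_le_add ?_ ih)
    refine (hunion {s(p.x, p.y)} {s(p.y, p.z)}).trans (le_of_eq ?_)
    simp [ew, P3.wt]

lemma sum_psel (P : Finset (P3 V)) (c : P3 V → Prop) (f : P3 V → ℝ) :
    ∑ p ∈ psel P c, f p = ∑ p ∈ P, if c p then f p else 0 := by
  unfold psel
  exact Finset.sum_filter _ _

lemma ew_eq_sum_ite (w : Sym2 V → ℝ) {M F : Finset (Sym2 V)} (h : F ⊆ M) :
    ew w F = ∑ f ∈ M, if f ∈ F then w f else 0 := by
  rw [← Finset.sum_filter, Finset.filter_mem_eq_inter, Finset.inter_eq_right.2 h, ew]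

lemma Mset3_subset (P : Finset (P3 V)) (M : Finset (Sym2 V)) : Mset3 P M ⊆ Y7 P M := by
  intro f hf
  obtain ⟨hfM, hfE⟩ := Finset.mem_inter.1 hf
  refine Finset.mem_sdiff.2 ⟨hfE, fun hX => ?_⟩
  obtain ⟨p, hp, rfl⟩ := Finset.mem_image.1 hX
  obtain ⟨-, -, h⟩ := mem_psel.1 hp
  unfold exOne at h
  split_ifs at hfM with h1
  · tauto
  · tauto

lemma bound_le {w : Sym2 V → ℝ} (hw : ∀ e, 0 ≤ w e) (P : Finset (P3 V)) (M : Finset (Sym2 V)) :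
    (2 / 3 : ℝ) * ew w M + (1 / 12 : ℝ) * ew w (Mset1' P M) +
        (1 / 6 : ℝ) * ew w (Mset1'' P M) + (1 / 4 : ℝ) * ew w (Mset1''' P M) +
        (1 / 6 : ℝ) * ew w (Mset2 P M) + (1 / 4 : ℝ) * ew w (Mset3 P M) +
        (1 / 3 : ℝ) * ew w (Mset4 P M) + (1 / 2 : ℝ) * ew w (X2 P M) +
        (1 / 2 : ℝ) * ew w (X3 w P M) + (1 / 2 : ℝ) * ew w (X4 w P M) +
        ew w (X5 P M) + (1 / 2 : ℝ) * ew w (X7 P M) -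
        (1 / 4 : ℝ) * ew w (Y7 P M) + (1 / 4 : ℝ) * ew w (Esub (psel P (cls6 M))) +
        (1 / 4 : ℝ) * ew w (Esub (psel P (cls8 M))) ≤
      ∑ f ∈ M, edgeRate P M f * w f + ∑ p ∈ P, pathValue w M p := by
  have hrate : ∑ f ∈ M, edgeRate P M f * w f =
      (2 / 3 : ℝ) * ew w M + (1 / 12 : ℝ) * ew w (Mset1' P M) +
        (1 / 6 : ℝ) * ew w (Mset1'' P M) + (1 / 4 : ℝ) * ew w (Mset1''' P M) +
        (1 / 6 : ℝ) * ew w (Mset2 P M) + (1 / 3 : ℝ) * ew w (Mset4 P M) := by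
    have hM1 : Mset1 P M ⊆ M := fun f hf => (mem_Mset1.1 hf).1
    rw [ew_eq_sum_ite w (F := Mset1' P M) fun f hf => hM1 (mem_Mset1'.1 hf).1,
      ew_eq_sum_ite w (F := Mset1'' P M) fun f hf => hM1 (mem_Mset1''.1 hf).1,
      ew_eq_sum_ite w (F := Mset1''' P M) fun f hf => hM1 (mem_Mset1'''.1 hf).1,
      ew_eq_sum_ite w (F := Mset2 P M) fun f hf => (mem_Mset2.1 hf).1,
      ew_eq_sum_ite w (F := Mset4 P M) fun f hf => (Finset.mem_inter.1 hf).1, ew]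
    simp only [Finset.mul_sum, ← Finset.sum_add_distrib, edgeRate, add_mul, ite_mul, mul_ite,
      zero_mul, mul_zero]
  have h2 := ew_image_le hw (psel P (cls2 M))
    fun p => if covered M p.x then s(p.x, p.y) else s(p.y, p.z)
  have h3 := ew_image_le hw (psel P (cls3 M)) (heavy w)
  have h4 := ew_image_le hw (psel P (cls4 M)) (heavy w)
  have h5 := ew_image_le hw (psel P (cls5 M))
    fun p => if s(p.x, p.y) ∈ M then s(p.y, p.z) else s(p.x, p.y)
  have h7 := ew_image_le hw (psel P (cls7 M))
    fun p => if s(p.x, p.y) ∈ M then s(p.y, p.z) else s(p.x, p.y)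
  have h6 := ew_Esub_le hw (psel P (cls6 M))
  have h8 := ew_Esub_le hw (psel P (cls8 M))
  have h37 := ew_mono hw (Mset3_subset P M)
  have hvalue : ∑ p ∈ P, pathValue w M p =
      1 / 2 * (∑ p ∈ psel P (cls2 M), w (if covered M p.x then s(p.x, p.y) else s(p.y, p.z))) +
      1 / 2 * (∑ p ∈ psel P (cls3 M), w (heavy w p)) +
      1 / 2 * (∑ p ∈ psel P (cls4 M), w (heavy w p)) +
      (∑ p ∈ psel P (cls5 M), w (if s(p.x, p.y) ∈ M then s(p.y, p.z) else s(p.x, p.y))) +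
      1 / 2 * (∑ p ∈ psel P (cls7 M), w (if s(p.x, p.y) ∈ M then s(p.y, p.z) else s(p.x, p.y))) +
      1 / 4 * (∑ p ∈ psel P (cls6 M), p.wt w) + 1 / 4 * ∑ p ∈ psel P (cls8 M), p.wt w := by
    simp only [sum_psel, Finset.mul_sum, ← Finset.sum_add_distrib, pathValue, mul_ite, mul_zero]
  rw [hrate, hvalue]
  unfold X2 X3 X4 X5 X7
  linarith

theorem statement_14 (n : ℕ) (hn : Fintype.card V = n) (h3 : 3 ∣ n)
    (w : Sym2 V → ℝ) (hw : ∀ e : Sym2 V, 0 ≤ w e)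
    (M : Finset (Sym2 V)) (hM : IsMaxMatchingOfSize w (n / 3) M)
    (Pstar : Finset (P3 V)) (hP : IsMaxPacking w Pstar) (hAss : Ass Pstar M) :
    ∃ P : Finset (P3 V), IsPacking P ∧
      (2 / 3 : ℝ) * ew w M + (1 / 12 : ℝ) * ew w (Mset1' Pstar M) +
        (1 / 6 : ℝ) * ew w (Mset1'' Pstar M) + (1 / 4 : ℝ) * ew w (Mset1''' Pstar M) +
        (1 / 6 : ℝ) * ew w (Mset2 Pstar M) + (1 / 4 : ℝ) * ew w (Mset3 Pstar M) +
        (1 / 3 : ℝ) * ew w (Mset4 Pstar M) + (1 / 2 : ℝ) * ew w (X2 Pstar M) +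
        (1 / 2 : ℝ) * ew w (X3 w Pstar M) + (1 / 2 : ℝ) * ew w (X4 w Pstar M) +
        ew w (X5 Pstar M) + (1 / 2 : ℝ) * ew w (X7 Pstar M) -
        (1 / 4 : ℝ) * ew w (Y7 Pstar M) + (1 / 4 : ℝ) * ew w (Esub (psel Pstar (cls6 M))) +
        (1 / 4 : ℝ) * ew w (Esub (psel Pstar (cls8 M))) ≤ pw w P := by
  obtain ⟨hMm, hMc, -⟩ := hM
  obtain ⟨⟨-, hdisj, hcover⟩, -⟩ := hP
  obtain ⟨m, hinv, hcov, hm⟩ := exists_mate hMm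
  choose own hownP hownv using hcover
  have hown : ∀ p ∈ Pstar, ∀ v ∈ p.verts, own v = p := by
    intro p hp v hv
    by_contra hne
    exact Finset.disjoint_left.1 (hdisj _ (hownP v) p hp hne) (hownv v) hv
  obtain ⟨P, hPack, hle⟩ := exists_packing_pathGain (ι := Pstar) (path := fun p => p.1)
    (own := fun v => ⟨own v, hownP v⟩) hw hMm (by omega) hinv hcov hm
    (fun p v hv => Subtype.ext (hown p.1 p.2 v hv))
  refine ⟨P, hPack, (bound_le hw Pstar M).trans (le_trans ?_ hle)⟩
  rw [Finset.sum_coe_sort Pstar (pathGain w M m)]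
  have hvalue := Finset.sum_le_sum fun p (_ : p ∈ Pstar) => pathValue_le hw hinv hcov hm p
  rw [Finset.sum_add_distrib, ← Finset.mul_sum] at hvalue
  have hcharge : ∑ p ∈ Pstar, ∑ v ∈ p.verts,
      (if covered M v then charge M p v * w s(v, m v) else 0) =
      ∑ f ∈ M, (∑ v ∈ f.toFinset, charge M (own v) v) * w f := by
    rw [← hMm.sum_covered hm, Finset.sum_filter]
    have huniv : (univ : Finset V) = Pstar.biUnion P3.verts := by
      ext v
      simpa using ⟨_, hownP v, hownv v⟩
    rw [huniv, Finset.sum_biUnion fun p hp q hq hpq => hdisj p hp q hq hpq]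
    refine Finset.sum_congr rfl fun p hp => Finset.sum_congr rfl fun v hv => ?_
    rw [hown p hp v hv]
  have hrate := Finset.sum_le_sum fun f (hf : f ∈ M) =>
    mul_le_mul_of_nonneg_right (edgeRate_le hown hf (hMm.1 f hf)) (hw f)
  simp only [sub_mul, one_mul, Finset.sum_sub_distrib] at hrate
  have hew : ew w M = ∑ f ∈ M, w f := rfl
  linarith

end MW3PP
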